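/- Let Φ = (φ_n)_{n≥1} be a uniformly bounded orthonormal system on [0,1] and let p ∈ P_ln. Then there exists a measure preserving transformation ω : [0,1] → [0,1] and a function f ∈ L^{p(ω(·))}[0,1] such that the set of points x ∈ [0,1] at which sup_{m≥1} |S_m(f,x)| = ∞ (i.e. the Fourier series of f with respect to Φ diverges unboundedly) has positive Lebesgue measure. -/

import Mathlib

open MeasureTheory Set Filter

/-- `φ` (indexed from `1`) is an orthonormal system on `[0,1]`:
`∫_0^1 φ_n φ_m = δ_{nm}`. -/
def IsONS (φ : ℕ → ℝ → ℝ) : Prop :=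
  (∀ n, 1 ≤ n → Measurable (φ n)) ∧
  ∀ n m, 1 ≤ n → 1 ≤ m →
    (∫ t in Set.Icc (0:ℝ) 1, φ n t * φ m t) = if n = m then 1 else 0

/-- `φ` is uniformly bounded by `M` on `[0,1]`. -/
def UnifBounded (φ : ℕ → ℝ → ℝ) (M : ℝ) : Prop :=
  0 < M ∧ ∀ n, 1 ≤ n → ∀ᵐ t ∂(volume.restrict (Set.Icc (0:ℝ) 1)), |φ n t| ≤ M

/-- Fourier coefficient `c_n(f) = ∫_0^1 f φ_n`. -/
noncomputable def fourierCoef (φ : ℕ → ℝ → ℝ) (f : ℝ → ℝ) (n : ℕ) : ℝ :=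
  ∫ t in Set.Icc (0:ℝ) 1, f t * φ n t

/-- Partial sum `S_m(f,x) = ∑_{n=1}^m c_n(f) φ_n(x)`. -/
noncomputable def partialSum (φ : ℕ → ℝ → ℝ) (f : ℝ → ℝ) (m : ℕ) (x : ℝ) : ℝ :=
  ∑ n ∈ Finset.Icc 1 m, fourierCoef φ f n * φ n x

/-- The Luxemburg norm of `f` in the variable exponent Lebesgue space `L^{q(·)}[0,1]`:
`inf {λ > 0 : ∫_0^1 (|f|/λ)^{q(x)} dx ≤ 1}`, with `inf ∅ = ∞`. -/
noncomputable def vpNorm (q f : ℝ → ℝ) : ENNReal :=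
  sInf {l : ENNReal | ∃ r : ℝ, 0 < r ∧ l = ENNReal.ofReal r ∧
    (∫⁻ x in Set.Icc (0:ℝ) 1, ENNReal.ofReal ((|f x| / r) ^ (q x))) ≤ 1}

/-- `ω : [0,1] → [0,1]` is a measure preserving transformation. -/
def MeasurePreserving01 (ω : ℝ → ℝ) : Prop :=
  Set.MapsTo ω (Set.Icc (0:ℝ) 1) (Set.Icc (0:ℝ) 1) ∧
    MeasurePreserving ω (volume.restrict (Set.Icc (0:ℝ) 1))
      (volume.restrict (Set.Icc (0:ℝ) 1))

/-- `p ∈ P_ln`: `p : [0,1] → [1,∞)` is increasing, `p(0) = 1`, `p(t) > 1` for `t ∈ (0,1]`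
and `liminf_{t→0+} (p(t)-1) ln(e/t) < ∞` (i.e. the quantity is frequently bounded near `0+`). -/
def MemPln (p : ℝ → ℝ) : Prop :=
  MonotoneOn p (Set.Icc (0:ℝ) 1) ∧ p 0 = 1 ∧ (∀ t ∈ Set.Ioc (0:ℝ) 1, 1 < p t) ∧
    ∃ C : ℝ, ∃ᶠ t in nhdsWithin 0 (Set.Ioi (0:ℝ)),
      (p t - 1) * Real.log (Real.exp 1 / t) ≤ C

/-!
Blocks `∑_{m ≤ n < m + j} φ_n(x) φ_n(y)` of the Dirichlet kernel have unbounded `L¹(dy)`-norm. If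
all blocks `S_j` were bounded in `L¹`, then a long block `S_l`, whose `L²`-norm is large, would
carry a fixed amount of `L¹`-mass on a small set `V` where much shorter blocks are negligible.
Passing from the lengths `j ∈ L` to the lengths `j` and `l + j` would then raise the average
`L¹`-norm by a fixed amount, gained on `V`, and iterating this doubling contradicts the bound. So
for every `A` there is a `J` such that, for `x` in a set of measure bounded below, for infinitely
many `m` some `j ≤ J` gives a block of `L¹`-norm at least `A`.

For fixed `x` these blocks tend weakly to zero as `m → ∞`, so their positive parts keep a large
integral. Products of weakly convergent functions of different variables converge weakly to the
product of the limits, so for almost every `(y_1, …, y_Q)` a single `m` makes the `Q` blocks at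
`(x, y_k)` nearly as large as the weak limit of the positive parts, and by the law of large numbers
their mean is large. A mean of `Q` point masses, hence also a normalized indicator of a set of
arbitrary prescribed small measure `t`, thus has large partial sums on a set of measure bounded
below.

Choosing `t = t_k` rapidly decreasing with `(p(t_k) - 1) ln(e / t_k) ≤ C`, these sets can be made
disjoint sets `D_k`. Uniform boundedness in `ℓ¹` yields a summable `a` for which the series of
`∑ a_k (t_k / 2)⁻¹ 1_{D_k}` diverges on a set of positive measure. A measure preserving `ω` carrying
`D_k` into `[0, t_k]` makes `(1 / t_k)^{p(ω)}` comparable to `1 / t_k` on `D_k`, which puts this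
function into `L^{p(ω)}`.
-/

section LebesgueConstants

variable {Ω : Type*} [MeasurableSpace Ω] {P : Measure Ω} {M : ℝ} {ψ : ℕ → Ω → ℝ}

lemma integrable_of_abs_le [IsFiniteMeasure P] {f : Ω → ℝ} (hf : Measurable f) {C : ℝ}
    (hC : ∀ z, |f z| ≤ C) : Integrable f P :=
  Integrable.of_bound hf.aestronglyMeasurable C (ae_of_all _ hC)

/-- A uniformly bounded orthogonal sequence whose squared norms are at least `1/2`; the lower bound
leaves room for restricting an orthonormal system to a set of almost full measure. -/
structure IsBddOrthogonal (P : Measure Ω) (M : ℝ) (ψ : ℕ → Ω → ℝ) : Prop where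
  measurable : ∀ n, Measurable (ψ n)
  abs_le : ∀ n z, |ψ n z| ≤ M
  integral_mul_eq_zero : ∀ n m, n ≠ m → ∫ z, ψ n z * ψ m z ∂P = 0
  half_le_integral_mul_self : ∀ n, 1 / 2 ≤ ∫ z, ψ n z * ψ n z ∂P

namespace IsBddOrthogonal

lemma shift (h : IsBddOrthogonal P M ψ) (l : ℕ) : IsBddOrthogonal P M (fun n => ψ (l + n)) where
  measurable n := h.measurable _
  abs_le n := h.abs_le _
  integral_mul_eq_zero n m hnm := h.integral_mul_eq_zero _ _ (by omega)
  half_le_integral_mul_self n := h.half_le_integral_mul_self _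

lemma measurable_sum (h : IsBddOrthogonal P M ψ) (s : Finset ℕ) :
    Measurable (fun z => ∑ n ∈ s, ψ n z) :=
  Finset.measurable_fun_sum _ fun n _ => h.measurable n

lemma abs_sum_range_le (h : IsBddOrthogonal P M ψ) (l : ℕ) (z : Ω) :
    |∑ n ∈ Finset.range l, ψ n z| ≤ M * l :=
  calc |∑ n ∈ Finset.range l, ψ n z| ≤ ∑ n ∈ Finset.range l, |ψ n z| :=
        Finset.abs_sum_le_sum_abs _ _
    _ ≤ ∑ _n ∈ Finset.range l, M := Finset.sum_le_sum fun n _ => h.abs_le n z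
    _ = M * l := by simp [mul_comm]

lemma integrable_sum_range [IsFiniteMeasure P] (h : IsBddOrthogonal P M ψ) (l : ℕ) :
    Integrable (fun z => ∑ n ∈ Finset.range l, ψ n z) P :=
  integrable_of_abs_le (h.measurable_sum _) (h.abs_sum_range_le l)

lemma integrable_mul [IsFiniteMeasure P] (h : IsBddOrthogonal P M ψ) (n m : ℕ) :
    Integrable (fun z => ψ n z * ψ m z) P :=
  integrable_of_abs_le ((h.measurable n).mul (h.measurable m)) (C := M * M) fun z => by
    rw [abs_mul]
    exact mul_le_mul (h.abs_le n z) (h.abs_le m z) (abs_nonneg _)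
      ((abs_nonneg _).trans (h.abs_le n z))

lemma half_le_integral_sum_range_sq [IsFiniteMeasure P] (h : IsBddOrthogonal P M ψ) (l : ℕ) :
    (l : ℝ) / 2 ≤ ∫ z, (∑ n ∈ Finset.range l, ψ n z) ^ 2 ∂P := by
  have pythagoras : ∫ z, (∑ n ∈ Finset.range l, ψ n z) ^ 2 ∂P
      = ∑ n ∈ Finset.range l, ∫ z, ψ n z * ψ n z ∂P := by
    simp_rw [sq, Finset.sum_mul_sum]
    rw [integral_finsetSum _ fun n _ => integrable_finsetSum _ fun m _ => h.integrable_mul n m]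
    refine Finset.sum_congr rfl fun n hn => ?_
    rw [integral_finsetSum _ fun m _ => h.integrable_mul n m]
    exact Finset.sum_eq_single_of_mem n hn fun m _ hm => h.integral_mul_eq_zero n m hm.symm
  rw [pythagoras]
  calc (l : ℝ) / 2 = ∑ _n ∈ Finset.range l, (1 / 2 : ℝ) := by simp [div_eq_mul_inv]
    _ ≤ _ := Finset.sum_le_sum fun n _ => h.half_le_integral_mul_self n

end IsBddOrthogonal

lemma measureReal_div_le_abs_le [IsFiniteMeasure P] {g : Ω → ℝ} (hg : Integrable g P) {s A : ℝ}
    (hs : 0 < s) (hA : 0 < A) (hle : ∫ z, |g z| ∂P ≤ A) :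
    P.real {z | s / (2 * A) ≤ |g z|} ≤ 2 * A ^ 2 / s := by
  have markov := (mul_meas_ge_le_integral_of_nonneg (ae_of_all P fun z => abs_nonneg (g z))
    hg.abs (s / (2 * A))).trans hle
  calc P.real {z | s / (2 * A) ≤ |g z|}
      = s / (2 * A) * P.real {z | s / (2 * A) ≤ |g z|} * (2 * A / s) := by field_simp
    _ ≤ A * (2 * A / s) := by gcongr
    _ = 2 * A ^ 2 / s := by ring

lemma le_setIntegral_abs_of_le_integral_sq [IsFiniteMeasure P] {g : Ω → ℝ} (hg : Measurable g)
    {s A B : ℝ} (hs : 0 < s) (hA : 0 < A) (hB : 0 < B) (hgB : ∀ z, |g z| ≤ B)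
    (hle : ∫ z, |g z| ∂P ≤ A) (hsq : s ≤ ∫ z, g z ^ 2 ∂P) :
    s / (2 * B) ≤ ∫ z in {z | s / (2 * A) ≤ |g z|}, |g z| ∂P := by
  have hgi : Integrable (fun z => |g z|) P := (integrable_of_abs_le hg hgB).abs
  have hsqi : Integrable (fun z => g z ^ 2) P :=
    integrable_of_abs_le (hg.pow_const 2) (C := B ^ 2) fun z => by
      rw [abs_pow]
      exact pow_le_pow_left₀ (abs_nonneg _) (hgB z) 2
  have hV : MeasurableSet {z | s / (2 * A) ≤ |g z|} := measurableSet_le measurable_const hg.abs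
  set V := {z | s / (2 * A) ≤ |g z|}
  have low : ∫ z in Vᶜ, g z ^ 2 ∂P ≤ s / 2 :=
    calc ∫ z in Vᶜ, g z ^ 2 ∂P ≤ ∫ z in Vᶜ, s / (2 * A) * |g z| ∂P := by
          refine setIntegral_mono_on hsqi.integrableOn (hgi.const_mul _).integrableOn hV.compl
            fun z hz => ?_
          have hz' : |g z| < s / (2 * A) := not_le.mp hz
          rw [← sq_abs, sq]
          exact mul_le_mul_of_nonneg_right hz'.le (abs_nonneg _)
      _ ≤ ∫ z, s / (2 * A) * |g z| ∂P :=
          setIntegral_le_integral (hgi.const_mul _) (ae_of_all _ fun z => by positivity)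
      _ ≤ s / (2 * A) * A := by rw [integral_const_mul]; gcongr
      _ = s / 2 := by field_simp
  have high : ∫ z in V, g z ^ 2 ∂P ≤ B * ∫ z in V, |g z| ∂P := by
    rw [← integral_const_mul]
    refine setIntegral_mono_on hsqi.integrableOn (hgi.const_mul _).integrableOn hV fun z _ => ?_
    rw [← sq_abs, sq]
    exact mul_le_mul_of_nonneg_right (hgB z) (abs_nonneg _)
  rw [div_le_iff₀ (by positivity)]
  linarith [integral_add_compl hV hsqi]

/-- For every sequence `ψ` bounded and orthogonal under some `P` whose blocks inside `[0, J]` have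
`L¹`-norm at most `A`, the translates `w + ∑ n < j, ψ n` with `j ∈ L` have, on average over `L`,
`L¹`-norm at least `c` off any set of measure at most `u`. Removing a small set and adding an
arbitrary `w` is what allows the bound `c` to be increased by recursion. -/
def SpreadsMass (Ω : Type*) [MeasurableSpace Ω] (M A c : ℝ) (L : Multiset ℕ) (J : ℕ) (u : ℝ) :
    Prop :=
  ∀ (P : Measure Ω) [IsFiniteMeasure P] (ψ : ℕ → Ω → ℝ), IsBddOrthogonal P M ψ →
    (∀ i l, i + l ≤ J → ∫ z, |∑ n ∈ Finset.range l, ψ (i + n) z| ∂P ≤ A) →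
    ∀ U : Set Ω, MeasurableSet U → P.real U ≤ u → ∀ w : Ω → ℝ, Integrable w P →
      L.card * c ≤ (L.map fun j => ∫ z in Uᶜ, |w z + ∑ n ∈ Finset.range j, ψ n z| ∂P).sum

lemma abs_sub_two_mul_le_abs_add_abs {w g p q b : ℝ} (hp : |p| ≤ b) (hq : |q| ≤ b) :
    |g| - 2 * b ≤ |w + p| + |w + (g + q)| := by
  obtain ⟨hp₁, hp₂⟩ := abs_le.mp hp
  obtain ⟨hq₁, hq₂⟩ := abs_le.mp hq
  refine sub_le_iff_le_add.mpr (abs_le'.mpr ⟨?_, ?_⟩) <;>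
    linarith [le_abs_self (w + p), neg_abs_le (w + p), le_abs_self (w + (g + q)),
      neg_abs_le (w + (g + q))]

lemma setIntegral_compl_eq_add_sdiff {f : Ω → ℝ} (hf : Integrable f P) {U V : Set Ω}
    (hU : MeasurableSet U) (hV : MeasurableSet V) :
    ∫ z in Uᶜ, f z ∂P = ∫ z in (U ∪ V)ᶜ, f z ∂P + ∫ z in V \ U, f z ∂P := by
  have hunion : Uᶜ = (U ∪ V)ᶜ ∪ (V \ U) := by
    ext z
    simp only [mem_compl_iff, mem_union, Set.mem_sdiff]
    tauto
  rw [hunion, setIntegral_union _ (hV.diff hU) hf.integrableOn hf.integrableOn]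
  exact Set.disjoint_left.mpr fun z hz hz' => hz (Or.inr hz'.1)

lemma setIntegral_sub_le_setIntegral_sdiff [IsFiniteMeasure P] {g : Ω → ℝ} (hg : Integrable g P)
    {B : ℝ} (hg0 : ∀ z, 0 ≤ g z) (hgB : ∀ z, g z ≤ B) {U V : Set Ω} (hU : MeasurableSet U) :
    ∫ z in V, g z ∂P - P.real U * B ≤ ∫ z in V \ U, g z ∂P := by
  have hcover : ∫ z in V, g z ∂P ≤ ∫ z in V \ U, g z ∂P + ∫ z in U, g z ∂P := by
    rw [← setIntegral_union Set.disjoint_sdiff_left hU hg.integrableOn hg.integrableOn]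
    refine setIntegral_mono_set hg.integrableOn (ae_of_all _ hg0) (LE.le.eventuallyLE ?_)
    rw [Set.sdiff_union_self]
    exact Set.subset_union_left
  have hbound : ∫ z in U, g z ∂P ≤ P.real U * B := by
    rw [← smul_eq_mul, ← setIntegral_const]
    exact integral_mono hg.integrableOn (integrable_const _).integrableOn hgB
  linarith

lemma IsBddOrthogonal.le_setIntegral_add_setIntegral [IsFiniteMeasure P]
    (h : IsBddOrthogonal P M ψ) (hM : 0 < M) {w : Ω → ℝ} (hw : Integrable w P) {j J : ℕ}
    (hj : j ≤ J) (l : ℕ) {U V : Set Ω} (hU : MeasurableSet U) :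
    ∫ z in V, |∑ n ∈ Finset.range l, ψ n z| ∂P - P.real U * (M * l) - P.real V * (2 * (M * J)) ≤
      ∫ z in V \ U, |w z + ∑ n ∈ Finset.range j, ψ n z| ∂P +
        ∫ z in V \ U, |w z + ∑ n ∈ Finset.range (l + j), ψ n z| ∂P := by
  have hw' : ∀ i, Integrable (fun z => |w z + ∑ n ∈ Finset.range i, ψ n z|) P := fun i =>
    (hw.add (h.integrable_sum_range i)).abs
  have hG := (h.integrable_sum_range l).abs
  have hjJ : M * j ≤ M * J := by gcongr
  rw [← integral_add (hw' j).integrableOn (hw' (l + j)).integrableOn]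
  calc ∫ z in V, |∑ n ∈ Finset.range l, ψ n z| ∂P - P.real U * (M * l)
        - P.real V * (2 * (M * J))
      ≤ ∫ z in V \ U, |∑ n ∈ Finset.range l, ψ n z| ∂P - P.real (V \ U) * (2 * (M * J)) :=
        sub_le_sub
          (setIntegral_sub_le_setIntegral_sdiff hG (fun _ => abs_nonneg _) (h.abs_sum_range_le l)
            hU)
          (mul_le_mul_of_nonneg_right (measureReal_mono Set.sdiff_subset) (by positivity))
    _ = ∫ z in V \ U, (|∑ n ∈ Finset.range l, ψ n z| - 2 * (M * J)) ∂P := by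
        rw [integral_sub hG.integrableOn (integrable_const _).integrableOn, setIntegral_const,
          smul_eq_mul]
    _ ≤ _ := by
        refine integral_mono (hG.sub (integrable_const _)).integrableOn
          ((hw' j).add (hw' (l + j))).integrableOn fun z => ?_
        simp only [Finset.sum_range_add _ l j]
        exact abs_sub_two_mul_le_abs_add_abs ((h.abs_sum_range_le j z).trans hjJ)
          (((h.shift l).abs_sum_range_le j z).trans hjJ)

lemma IsBddOrthogonal.exists_le_setIntegral_abs_sum_range [IsFiniteMeasure P]
    (h : IsBddOrthogonal P M ψ) (hM : 0 < M) {A : ℝ} (hA : 0 < A) {l : ℕ} (hl : 0 < l)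
    (hle : ∫ z, |∑ n ∈ Finset.range l, ψ n z| ∂P ≤ A) :
    ∃ V : Set Ω, MeasurableSet V ∧ P.real V ≤ 4 * A ^ 2 / l ∧
      1 / (4 * M) ≤ ∫ z in V, |∑ n ∈ Finset.range l, ψ n z| ∂P := by
  have hl' : (0 : ℝ) < l := by exact_mod_cast hl
  refine ⟨{z | (l / 2 : ℝ) / (2 * A) ≤ |∑ n ∈ Finset.range l, ψ n z|},
    measurableSet_le measurable_const (h.measurable_sum _).abs, ?_, ?_⟩
  · exact (measureReal_div_le_abs_le (h.integrable_sum_range l) (half_pos hl') hA hle).trans_eq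
      (by field_simp; ring)
  · exact (by field_simp; norm_num : 1 / (4 * M) = (l / 2 : ℝ) / (2 * (M * l))).trans_le
      (le_setIntegral_abs_of_le_integral_sq (h.measurable_sum _) (half_pos hl') hA
        (mul_pos hM hl') (h.abs_sum_range_le l) hle (h.half_le_integral_sum_range_sq l))

lemma SpreadsMass.double {A c u : ℝ} {L : Multiset ℕ} {J : ℕ}
    (hL : SpreadsMass Ω M A c L J u) (hM : 0 < M) (hA : 0 < A) (hLJ : ∀ j ∈ L, j ≤ J) {l : ℕ}
    (hl : 0 < l) (hlu : 8 * A ^ 2 ≤ u * l) (hlJ : 128 * M ^ 2 * A ^ 2 * J ≤ l) :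
    SpreadsMass Ω M A (c + 1 / (16 * M)) (L + L.map (l + ·)) (l + J)
      (min (u / 2) (1 / (16 * M ^ 2 * l))) := by
  intro P _ ψ hψ hb U hU hUu w hw
  have hl' : (0 : ℝ) < l := by exact_mod_cast hl
  obtain ⟨V, hV, hPV, hmass⟩ :=
    hψ.exists_le_setIntegral_abs_sum_range hM hA hl (by simpa using hb 0 l (by omega))
  have hUV : P.real (U ∪ V) ≤ u := by
    have : 4 * A ^ 2 / l ≤ u / 2 := by rw [div_le_iff₀ hl']; linarith
    linarith [measureReal_union_le (μ := P) U V, hUu.trans (min_le_left _ _)]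
  have first := hL P ψ hψ (fun i l' h => hb i l' (by omega)) (U ∪ V) (hU.union hV) hUV w hw
  have second := hL P _ (hψ.shift l)
    (fun i l' h => by simpa only [add_assoc] using hb (l + i) l' (by omega)) (U ∪ V)
    (hU.union hV) hUV _ (hw.add (hψ.integrable_sum_range l))
  have gain : ∀ j ∈ L, 2 * (1 / (16 * M)) ≤
      ∫ z in V \ U, |w z + ∑ n ∈ Finset.range j, ψ n z| ∂P +
        ∫ z in V \ U, |w z + ∑ n ∈ Finset.range (l + j), ψ n z| ∂P := fun j hj => by
    refine le_trans ?_ (hψ.le_setIntegral_add_setIntegral hM hw (hLJ j hj) l hU)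
    have hU' : P.real U * (M * l) ≤ 1 / (16 * M) :=
      calc P.real U * (M * l) ≤ 1 / (16 * M ^ 2 * l) * (M * l) := by
            gcongr; exact hUu.trans (min_le_right _ _)
        _ = 1 / (16 * M) := by field_simp
    have hV' : P.real V * (2 * (M * J)) ≤ 1 / (16 * M) :=
      calc P.real V * (2 * (M * J)) ≤ 4 * A ^ 2 / l * (2 * (M * J)) := by gcongr
        _ = 128 * M ^ 2 * A ^ 2 * J / l * (1 / (16 * M)) := by field_simp; ring
        _ ≤ 1 / (16 * M) :=
            mul_le_of_le_one_left (by positivity) ((div_le_one hl').mpr hlJ)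
    linarith [(by field_simp; norm_num : 1 / (4 * M) = 4 * (1 / (16 * M)))]
  have third := Multiset.card_nsmul_le_sum (Multiset.forall_mem_map_iff.mpr gain)
  have hi : ∀ j, Integrable (fun z => |w z + ∑ n ∈ Finset.range j, ψ n z|) P := fun j =>
    (hw.add (hψ.integrable_sum_range j)).abs
  simp only [Pi.add_apply, add_assoc, ← Finset.sum_range_add] at second
  simp only [Multiset.card_map, nsmul_eq_mul, Multiset.sum_map_add] at third
  simp only [Multiset.map_add, Multiset.map_map, Function.comp_apply, Multiset.sum_add,
    Multiset.card_add, Multiset.card_map, setIntegral_compl_eq_add_sdiff (hi _) hU hV,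
    Multiset.sum_map_add, Nat.cast_add]
  linarith

lemma exists_spreadsMass (Ω : Type*) [MeasurableSpace Ω] (hM : 0 < M) {A : ℝ} (hA : 0 < A)
    (k : ℕ) :
    ∃ (L : Multiset ℕ) (J : ℕ) (u : ℝ), L ≠ 0 ∧ (∀ j ∈ L, j ≤ J) ∧ 0 < u ∧
      SpreadsMass Ω M A (k * (1 / (16 * M))) L J u := by
  induction k with
  | zero =>
    refine ⟨{0}, 0, 1, by simp, by simp, one_pos, fun P _ ψ _ _ U _ _ w _ => ?_⟩
    simpa using integral_nonneg fun z => abs_nonneg (w z)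
  | succ k ih =>
    obtain ⟨L, J, u, hL, hLJ, hu, ih⟩ := ih
    obtain ⟨l, hl⟩ := exists_nat_gt (max (8 * A ^ 2 / u) (128 * M ^ 2 * A ^ 2 * J))
    obtain ⟨hlu, hlJ⟩ := max_lt_iff.mp hl
    have hl0 : (0 : ℝ) < l := lt_of_le_of_lt (by positivity) hlu
    have hdouble := ih.double hM hA hLJ (by exact_mod_cast hl0) ((div_lt_iff₀' hu).mp hlu).le
      hlJ.le
    refine ⟨L + L.map (l + ·), l + J, min (u / 2) (1 / (16 * M ^ 2 * l)), by simp [hL],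
      fun j hj => ?_, by positivity, by simpa only [Nat.cast_succ, add_one_mul] using hdouble⟩
    rcases Multiset.mem_add.mp hj with hj | hj
    · exact (hLJ j hj).trans (by omega)
    · obtain ⟨i, hi, rfl⟩ := Multiset.mem_map.mp hj
      exact Nat.add_le_add_left (hLJ i hi) l

lemma IsBddOrthogonal.integral_abs_block_le [IsFiniteMeasure P] (h : IsBddOrthogonal P M ψ)
    (i l : ℕ) :
    ∫ z, |∑ n ∈ Finset.range l, ψ (i + n) z| ∂P ≤
      ∫ z, |∑ n ∈ Finset.range (i + l), ψ n z| ∂P + ∫ z, |∑ n ∈ Finset.range i, ψ n z| ∂P := by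
  rw [← integral_add (h.integrable_sum_range _).abs (h.integrable_sum_range _).abs]
  refine integral_mono ((h.shift i).integrable_sum_range l).abs
    ((h.integrable_sum_range _).abs.add (h.integrable_sum_range _).abs) fun z => ?_
  simpa only [Finset.sum_range_add, add_sub_cancel_left] using
    abs_sub (∑ n ∈ Finset.range (i + l), ψ n z) (∑ n ∈ Finset.range i, ψ n z)

theorem exists_le_integral_abs_sum_range (Ω : Type*) [MeasurableSpace Ω] (hM : 0 < M) {A : ℝ}
    (hA : 0 < A) :
    ∃ J : ℕ, ∀ (P : Measure Ω) [IsFiniteMeasure P] (ψ : ℕ → Ω → ℝ), IsBddOrthogonal P M ψ →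
      ∃ j ≤ J, A ≤ ∫ z, |∑ n ∈ Finset.range j, ψ n z| ∂P := by
  obtain ⟨k, hk⟩ := exists_nat_gt (A / (1 / (16 * M)))
  rw [div_lt_iff₀ (by positivity)] at hk
  obtain ⟨L, J, u, hL, hLJ, hu, hspread⟩ :=
    exists_spreadsMass Ω hM (A := 2 * A) (by positivity) k
  refine ⟨J, fun P _ ψ hψ => ?_⟩
  by_contra! hlt
  have lower := hspread P ψ hψ
    (fun i l hil => by linarith [hψ.integral_abs_block_le i l, hlt i (by omega), hlt _ hil])
    ∅ MeasurableSet.empty (by simpa using hu.le) (fun _ => 0) (integrable_zero _ _ _)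
  have upper : (L.map fun j => ∫ z in (∅ : Set Ω)ᶜ, |0 + ∑ n ∈ Finset.range j, ψ n z| ∂P).sum
      ≤ L.card * A := by
    refine (Multiset.sum_le_card_nsmul _ A (Multiset.forall_mem_map_iff.mpr fun j hj => ?_)).trans
      (by simp)
    simpa using (hlt j (hLJ j hj)).le
  have hcard : (0 : ℝ) < L.card := by exact_mod_cast Multiset.card_pos.mpr hL
  nlinarith

end LebesgueConstants

section BoundedOrthonormal

variable {Ω : Type*} [MeasurableSpace Ω] {μ : Measure Ω} {M : ℝ} {φ : ℕ → Ω → ℝ}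

/-- A uniformly bounded orthonormal sequence of `L²(μ)`. It is indexed from `0`, and the bound holds
everywhere, which an ae-modification achieves. -/
structure IsBddONS (μ : Measure Ω) (M : ℝ) (φ : ℕ → Ω → ℝ) : Prop where
  measurable : ∀ n, Measurable (φ n)
  abs_le : ∀ n z, |φ n z| ≤ M
  integral_mul : ∀ n m, ∫ z, φ n z * φ m z ∂μ = if n = m then 1 else 0

/-- The block `∑_{m ≤ n < m + j} φ_n(x) φ_n(y)` of the Dirichlet kernel. -/
def kernelBlock (φ : ℕ → Ω → ℝ) (m j : ℕ) (x y : Ω) : ℝ :=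
  ∑ n ∈ Finset.range j, φ (m + n) x * φ (m + n) y

lemma tendsto_measureReal_biUnion_ge [IsFiniteMeasure μ] {S : ℕ → Set Ω}
    (hS : ∀ n, MeasurableSet (S n)) :
    Tendsto (fun n => μ.real (⋃ m ≥ n, S m)) atTop
      (nhds (μ.real {x | ∃ᶠ n in atTop, x ∈ S n})) := by
  have hanti : Antitone fun n => ⋃ m ≥ n, S m := fun n k hnk =>
    biUnion_subset_biUnion_left fun m (hm : k ≤ m) => hnk.trans hm
  have hinter : {x | ∃ᶠ n in atTop, x ∈ S n} = ⋂ n, ⋃ m ≥ n, S m := by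
    ext x
    simp [frequently_atTop]
  rw [hinter]
  exact (ENNReal.tendsto_toReal (measure_ne_top _ _)).comp (tendsto_measure_iInter_atTop
    (fun n => (MeasurableSet.biUnion (to_countable _) fun m _ => hS m).nullMeasurableSet) hanti
    ⟨0, measure_ne_top _ _⟩)

lemma le_measureReal_frequently_mem [IsFiniteMeasure μ] {S : ℕ → Set Ω}
    (hS : ∀ n, MeasurableSet (S n)) {δ : ℝ} (hδ : ∀ n, δ ≤ μ.real (S n)) :
    δ ≤ μ.real {x | ∃ᶠ n in atTop, x ∈ S n} :=
  ge_of_tendsto' (tendsto_measureReal_biUnion_ge hS) fun n =>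
    (hδ n).trans (measureReal_mono
      (subset_biUnion_of_mem (u := S) (show n ≥ n from le_refl n)) (measure_ne_top _ _))

namespace IsBddONS

lemma abs_mul_le (h : IsBddONS μ M φ) (n m : ℕ) (x y : Ω) : |φ n x * φ m y| ≤ M ^ 2 := by
  rw [abs_mul, sq]
  exact mul_le_mul (h.abs_le n x) (h.abs_le m y) (abs_nonneg _)
    ((abs_nonneg _).trans (h.abs_le n x))

lemma integrable [IsFiniteMeasure μ] (h : IsBddONS μ M φ) (n : ℕ) : Integrable (φ n) μ :=
  integrable_of_abs_le (h.measurable n) (h.abs_le n)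

lemma integrable_mul [IsFiniteMeasure μ] (h : IsBddONS μ M φ) (n m : ℕ) :
    Integrable (fun z => φ n z * φ m z) μ :=
  integrable_of_abs_le ((h.measurable n).mul (h.measurable m)) fun z => h.abs_mul_le n m z z

lemma abs_kernelBlock_le (h : IsBddONS μ M φ) (m j : ℕ) (x y : Ω) :
    |kernelBlock φ m j x y| ≤ M ^ 2 * j :=
  calc |kernelBlock φ m j x y| ≤ ∑ n ∈ Finset.range j, |φ (m + n) x * φ (m + n) y| :=
        Finset.abs_sum_le_sum_abs _ _
    _ ≤ ∑ _n ∈ Finset.range j, M ^ 2 := Finset.sum_le_sum fun n _ => h.abs_mul_le _ _ x y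
    _ = M ^ 2 * j := by simp [mul_comm]

lemma measurable_kernelBlock (h : IsBddONS μ M φ) (m j : ℕ) :
    Measurable (fun z : Ω × Ω => kernelBlock φ m j z.1 z.2) :=
  Finset.measurable_fun_sum _ fun _ _ =>
    ((h.measurable _).comp measurable_fst).mul ((h.measurable _).comp measurable_snd)

variable [IsProbabilityMeasure μ]

lemma pos (h : IsBddONS μ M φ) : 0 < M := by
  have : Nonempty Ω := nonempty_of_isProbabilityMeasure μ
  have hnonneg : 0 ≤ M := (abs_nonneg _).trans (h.abs_le 0 (Classical.arbitrary Ω))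
  refine hnonneg.lt_of_ne fun hM => ?_
  have hone : ∫ z, φ 0 z * φ 0 z ∂μ = 1 := by simp [h.integral_mul]
  have hzero : ∀ z, φ 0 z = 0 := fun z => abs_nonpos_iff.mp (hM ▸ h.abs_le 0 z)
  simp [hzero] at hone

lemma measurableSet_exists_le_integral_kernelBlock (h : IsBddONS μ M φ) (A : ℝ) (J m : ℕ) :
    MeasurableSet {x | ∃ j ≤ J, A ≤ ∫ y, |kernelBlock φ m j x y| ∂μ} := by
  have hunion : {x | ∃ j ≤ J, A ≤ ∫ y, |kernelBlock φ m j x y| ∂μ}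
      = ⋃ j ∈ Finset.range (J + 1), {x | A ≤ ∫ y, |kernelBlock φ m j x y| ∂μ} := by
    ext x
    simp
  rw [hunion]
  exact Finset.measurableSet_biUnion _ fun j _ => measurableSet_le measurable_const
    (h.measurable_kernelBlock m j).abs.stronglyMeasurable.integral_prod_right.measurable

lemma half_le_setIntegral_mul_self (h : IsBddONS μ M φ) {X : Set Ω} (hX : MeasurableSet X)
    (hXc : μ.real Xᶜ ≤ 1 / (2 * M ^ 2)) (n : ℕ) : 1 / 2 ≤ ∫ z in X, φ n z * φ n z ∂μ := by
  have hcompl : ∫ z in Xᶜ, φ n z * φ n z ∂μ ≤ 1 / 2 :=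
    calc ∫ z in Xᶜ, φ n z * φ n z ∂μ ≤ ∫ _ in Xᶜ, M ^ 2 ∂μ :=
          integral_mono (h.integrable_mul n n).integrableOn (integrable_const _).integrableOn
            fun _ => (le_abs_self _).trans (h.abs_mul_le n n _ _)
      _ = μ.real Xᶜ * M ^ 2 := by rw [setIntegral_const, smul_eq_mul]
      _ ≤ 1 / (2 * M ^ 2) * M ^ 2 := by gcongr
      _ = 1 / 2 := by have := h.pos; field_simp
  have hsplit := integral_add_compl hX (h.integrable_mul n n)
  rw [h.integral_mul, if_pos rfl] at hsplit
  linarith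

lemma isBddOrthogonal_tensor (h : IsBddONS μ M φ) {X : Set Ω} (hX : MeasurableSet X)
    (hXc : μ.real Xᶜ ≤ 1 / (2 * M ^ 2)) (m : ℕ) :
    IsBddOrthogonal ((μ.restrict X).prod μ) (M ^ 2) (fun n z => φ (m + n) z.1 * φ (m + n) z.2) := by
  have hprod : ∀ n k, ∫ z, φ (m + n) z.1 * φ (m + n) z.2 * (φ (m + k) z.1 * φ (m + k) z.2)
      ∂(μ.restrict X).prod μ = (∫ x in X, φ (m + n) x * φ (m + k) x ∂μ) * if n = k then 1 else 0 :=
    fun n k => by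
      simp only [mul_mul_mul_comm _ (φ (m + n) _)]
      rw [integral_prod_mul (fun x => φ (m + n) x * φ (m + k) x)
        fun y => φ (m + n) y * φ (m + k) y, h.integral_mul]
      simp only [Nat.add_left_cancel_iff]
  exact
    { measurable := fun n =>
        ((h.measurable _).comp measurable_fst).mul ((h.measurable _).comp measurable_snd)
      abs_le := fun n z => h.abs_mul_le _ _ _ _
      integral_mul_eq_zero := fun n k hnk => by rw [hprod, if_neg hnk, mul_zero]
      half_le_integral_mul_self := fun n => by
        rw [hprod, if_pos rfl, mul_one]
        exact h.half_le_setIntegral_mul_self hX hXc _ }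

lemma exists_le_measureReal_le_integral_kernelBlock (h : IsBddONS μ M φ) {A : ℝ} (hA : 0 < A) :
    ∃ J : ℕ, ∀ m, 1 / (2 * M ^ 2) ≤
      μ.real {x | ∃ j ≤ J, A ≤ ∫ y, |kernelBlock φ m j x y| ∂μ} := by
  obtain ⟨J, hJ⟩ := exists_le_integral_abs_sum_range (Ω × Ω) (pow_pos h.pos 2) (A := A + 1)
    (by positivity)
  refine ⟨J, fun m => ?_⟩
  by_contra! hlt
  have hS := h.measurableSet_exists_le_integral_kernelBlock A J m
  set S := {x | ∃ j ≤ J, A ≤ ∫ y, |kernelBlock φ m j x y| ∂μ}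
  obtain ⟨j, hj, hlarge⟩ := hJ ((μ.restrict Sᶜ).prod μ) _
    (h.isBddOrthogonal_tensor hS.compl (by simpa only [compl_compl] using hlt.le) m)
  have hint : Integrable (fun z : Ω × Ω => |kernelBlock φ m j z.1 z.2|)
      ((μ.restrict Sᶜ).prod μ) :=
    (integrable_of_abs_le (h.measurable_kernelBlock m j) fun z =>
      h.abs_kernelBlock_le m j z.1 z.2).abs
  have hsmall : ∫ z, |kernelBlock φ m j z.1 z.2| ∂(μ.restrict Sᶜ).prod μ ≤ A :=
    calc ∫ z, |kernelBlock φ m j z.1 z.2| ∂(μ.restrict Sᶜ).prod μ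
        = ∫ x in Sᶜ, ∫ y, |kernelBlock φ m j x y| ∂μ ∂μ := integral_prod _ hint
      _ ≤ ∫ _ in Sᶜ, A ∂μ := by
          refine setIntegral_mono_on hint.integral_prod_left (integrable_const _).integrableOn
            hS.compl fun x hx => ?_
          exact (not_le.mp fun hle => hx ⟨j, hj, hle⟩).le
      _ ≤ A := by
          rw [setIntegral_const, smul_eq_mul]
          exact mul_le_of_le_one_left hA.le measureReal_le_one
  exact absurd (hlarge.trans hsmall) (by simp)

lemma exists_le_measureReal_frequently (h : IsBddONS μ M φ) {A : ℝ} (hA : 0 < A) :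
    ∃ J : ℕ, 1 / (2 * M ^ 2) ≤
      μ.real {x | ∃ᶠ m in atTop, ∃ j ≤ J, A ≤ ∫ y, |kernelBlock φ m j x y| ∂μ} := by
  obtain ⟨J, hJ⟩ := h.exists_le_measureReal_le_integral_kernelBlock hA
  exact ⟨J, le_measureReal_frequently_mem
    (h.measurableSet_exists_le_integral_kernelBlock A J) hJ⟩

lemma memLp (h : IsBddONS μ M φ) (n : ℕ) : MemLp (φ n) 2 μ :=
  MemLp.of_bound (h.measurable n).aestronglyMeasurable M (ae_of_all _ (h.abs_le n))

lemma orthonormal (h : IsBddONS μ M φ) : Orthonormal ℝ (fun n => (h.memLp n).toLp (φ n)) := by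
  rw [orthonormal_iff_ite]
  intro n m
  rw [L2.inner_def, ← h.integral_mul n m]
  refine integral_congr_ae ?_
  filter_upwards [(h.memLp n).coeFn_toLp, (h.memLp m).coeFn_toLp] with z hn hm
  rw [hn, hm]
  simp [mul_comm]

lemma tendsto_setIntegral (h : IsBddONS μ M φ) {S : Set Ω} (hS : MeasurableSet S) :
    Tendsto (fun n => ∫ z in S, φ n z ∂μ) atTop (nhds 0) := by
  have bessel := (h.orthonormal.inner_products_summable
    (indicatorConstLp 2 hS (measure_ne_top μ S) (1 : ℝ))).tendsto_atTop_zero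
  have hinner : ∀ n, inner ℝ ((h.memLp n).toLp (φ n))
      (indicatorConstLp 2 hS (measure_ne_top μ S) (1 : ℝ)) = ∫ z in S, φ n z ∂μ := fun n => by
    rw [real_inner_comm, L2.inner_indicatorConstLp_one]
    exact setIntegral_congr_ae hS ((h.memLp n).coeFn_toLp.mono fun z hz _ => hz)
  simp only [hinner] at bessel
  rw [tendsto_zero_iff_norm_tendsto_zero]
  simpa [Function.comp_def, Real.sqrt_sq_eq_abs] using
    (Real.continuous_sqrt.tendsto 0).comp bessel

lemma tendsto_setIntegral_kernelBlock (h : IsBddONS μ M φ) {S : Set Ω} (hS : MeasurableSet S)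
    {J : ℕ} {j : ℕ → ℕ} (hj : ∀ m, j m ≤ J) (x : Ω) :
    Tendsto (fun m => ∫ y in S, kernelBlock φ m (j m) x y ∂μ) atTop (nhds 0) := by
  have hmajorant : Tendsto (fun m => ∑ n ∈ Finset.range J, M * |∫ y in S, φ (m + n) y ∂μ|) atTop
      (nhds 0) := by
    simpa using tendsto_finsetSum (Finset.range J) fun n _ =>
      (((h.tendsto_setIntegral hS).comp (tendsto_add_atTop_nat n)).abs.const_mul M)
  refine squeeze_zero_norm (fun m => ?_) hmajorant
  calc ‖∫ y in S, kernelBlock φ m (j m) x y ∂μ‖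
      = |∑ n ∈ Finset.range (j m), φ (m + n) x * ∫ y in S, φ (m + n) y ∂μ| := by
        simp only [kernelBlock, Real.norm_eq_abs]
        rw [integral_finsetSum _ fun n _ => ((h.integrable _).const_mul _).integrableOn]
        simp only [integral_const_mul]
    _ ≤ ∑ n ∈ Finset.range (j m), |φ (m + n) x * ∫ y in S, φ (m + n) y ∂μ| :=
        Finset.abs_sum_le_sum_abs _ _
    _ ≤ ∑ n ∈ Finset.range (j m), M * |∫ y in S, φ (m + n) y ∂μ| :=
        Finset.sum_le_sum fun n _ => by
          rw [abs_mul]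
          exact mul_le_mul_of_nonneg_right (h.abs_le _ x) (abs_nonneg _)
    _ ≤ ∑ n ∈ Finset.range J, M * |∫ y in S, φ (m + n) y ∂μ| :=
        Finset.sum_le_sum_of_subset_of_nonneg (Finset.range_mono (hj m)) fun _ _ _ =>
          mul_nonneg h.pos.le (abs_nonneg _)

end IsBddONS

end BoundedOrthonormal

section WeakLimits

lemma exists_tendsto_inner {ι H : Type*} [NormedAddCommGroup H] [InnerProductSpace ℝ H]
    [CompleteSpace H] (U : Ultrafilter ι) {x : ι → H} {C : ℝ} (hx : ∀ i, ‖x i‖ ≤ C) :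
    ∃ z, ∀ y, Tendsto (fun i => inner ℝ (x i) y) U (nhds (inner ℝ z y)) := by
  let w : ι → WeakDual ℝ H := fun i => StrongDual.toWeakDual (InnerProductSpace.toDual ℝ H (x i))
  have hw : ↑(U.map w) ≤
      principal (WeakDual.toStrongDual ⁻¹' Metric.closedBall (0 : StrongDual ℝ H) C) :=
    le_principal_iff.mpr <| Ultrafilter.mem_map.mpr <| Eventually.of_forall fun i =>
      mem_closedBall_zero_iff.mpr <|
        ((InnerProductSpace.toDual ℝ H).norm_map (x i)).trans_le (hx i)
  obtain ⟨l, -, hl⟩ := (WeakDual.isCompact_closedBall 0 C).ultrafilter_le_nhds (U.map w) hw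
  refine ⟨(InnerProductSpace.toDual ℝ H).symm (WeakDual.toStrongDual l), fun y => ?_⟩
  rw [InnerProductSpace.toDual_symm_apply]
  exact ((WeakDual.eval_continuous y).tendsto l).comp hl

variable {Ω ι : Type*} [MeasurableSpace Ω] {μ : Measure Ω} {U : Filter ι} {f : ι → Ω → ℝ}
  {g : Ω → ℝ} {B : ℝ}

/-- `g` is the weak limit of `f` along `U`, tested against indicators of measurable sets; for
uniformly bounded `f` and finite `μ` this is weak-* convergence in `L^∞(μ)`. -/
def IsWeakLimit (μ : Measure Ω) (U : Filter ι) (f : ι → Ω → ℝ) (g : Ω → ℝ) : Prop :=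
  ∀ S, MeasurableSet S → Tendsto (fun i => ∫ z in S, f i z ∂μ) U (nhds (∫ z in S, g z ∂μ))

lemma abs_setIntegral_le_of_abs_le [IsFiniteMeasure μ] {h : Ω → ℝ} (hb : ∀ z, |h z| ≤ B)
    (S : Set Ω) : |∫ z in S, h z ∂μ| ≤ B * μ.real S :=
  norm_setIntegral_le_of_norm_le_const (measure_lt_top μ S) fun z _ =>
    (Real.norm_eq_abs _).trans_le (hb z)

lemma IsWeakLimit.ae_le [IsFiniteMeasure μ] [NeBot U] (h : IsWeakLimit μ U f g)
    (hg : Integrable g μ) (hb : ∀ i z, |f i z| ≤ B) : ∀ᵐ z ∂μ, |g z| ≤ B := by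
  have hbound : ∀ S, MeasurableSet S → |∫ z in S, g z ∂μ| ≤ μ.real S * B := fun S hS => by
    rw [mul_comm]
    exact le_of_tendsto' (h S hS).abs fun i => abs_setIntegral_le_of_abs_le (hb i) S
  have hupper : g ≤ᵐ[μ] fun _ => B := by
    refine ae_le_of_forall_setIntegral_le hg (integrable_const B) fun S hS _ => ?_
    rw [setIntegral_const, smul_eq_mul]
    exact (abs_le.mp (hbound S hS)).2
  have hlower : (fun _ => -B) ≤ᵐ[μ] g := by
    refine ae_le_of_forall_setIntegral_le (integrable_const (-B)) hg fun S hS _ => ?_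
    rw [setIntegral_const, smul_eq_mul, mul_neg]
    exact (abs_le.mp (hbound S hS)).1
  filter_upwards [hupper, hlower] with z hz hz' using abs_le.mpr ⟨hz', hz⟩

lemma exists_isWeakLimit [IsFiniteMeasure μ] (U : Ultrafilter ι) (hf : ∀ i, Measurable (f i))
    (hb : ∀ i z, |f i z| ≤ B) :
    ∃ g, Measurable g ∧ (∀ z, |g z| ≤ B) ∧ IsWeakLimit μ U f g := by
  have hL : ∀ i, MemLp (f i) 2 μ := fun i =>
    MemLp.of_bound (hf i).aestronglyMeasurable B (ae_of_all _ (hb i))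
  have hnorm : ∀ i, ‖(hL i).toLp (f i)‖ ≤ μ.real univ ^ (ENNReal.toReal 2)⁻¹ * |B| := fun i =>
    Lp.norm_le_of_ae_bound (abs_nonneg B) <| (hL i).coeFn_toLp.mono fun z hz => by
      rw [hz]
      exact (hb i z).trans (le_abs_self B)
  obtain ⟨z, hz⟩ := exists_tendsto_inner U hnorm
  have hlim : IsWeakLimit μ U f z := fun S hS => by
    have hinner : ∀ v : Lp ℝ 2 μ,
        inner ℝ v (indicatorConstLp 2 hS (measure_ne_top μ S) (1 : ℝ)) = ∫ y in S, v y ∂μ :=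
      fun v => (real_inner_comm _ _).trans (L2.inner_indicatorConstLp_one hS _ v)
    have hlim := hz (indicatorConstLp 2 hS (measure_ne_top μ S) (1 : ℝ))
    simp only [hinner] at hlim
    exact hlim.congr fun i => setIntegral_congr_ae hS ((hL i).coeFn_toLp.mono fun z hz _ => hz)
  have hclamp : ∀ᵐ y ∂μ, max (-B) (min B (z y)) = z y := by
    filter_upwards [hlim.ae_le ((Lp.memLp z).integrable one_le_two) hb] with y hy
    rw [min_eq_right (abs_le.mp hy).2, max_eq_right (abs_le.mp hy).1]
  refine ⟨fun y => max (-B) (min B (z y)), measurable_const.max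
    (measurable_const.min (Lp.stronglyMeasurable z).measurable), fun y => ?_, fun S hS => ?_⟩
  · obtain ⟨i⟩ : Nonempty ι := U.neBot.nonempty
    have hB : 0 ≤ B := (abs_nonneg _).trans (hb i y)
    exact abs_le.mpr ⟨le_max_left _ _, max_le (by linarith) (min_le_left _ _)⟩
  · rw [setIntegral_congr_ae hS (hclamp.mono fun y hy _ => hy)]
    exact hlim S hS

lemma IsWeakLimit.of_isPiSystem [IsFiniteMeasure μ] {C : Set (Set Ω)}
    (hC : ‹MeasurableSpace Ω› = MeasurableSpace.generateFrom C) (hpi : IsPiSystem C)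
    (hf : ∀ i, Measurable (f i)) (hfb : ∀ i z, |f i z| ≤ B)
    (hg : Measurable g) (hgb : ∀ z, |g z| ≤ B)
    (huniv : Tendsto (fun i => ∫ z, f i z ∂μ) U (nhds (∫ z, g z ∂μ)))
    (hlim : ∀ S ∈ C, Tendsto (fun i => ∫ z in S, f i z ∂μ) U (nhds (∫ z in S, g z ∂μ))) :
    IsWeakLimit μ U f g := by
  have hfi := fun i => integrable_of_abs_le (P := μ) (hf i) (hfb i)
  have hgi := integrable_of_abs_le (P := μ) hg hgb
  refine MeasurableSpace.induction_on_inter (C := fun S _ =>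
    Tendsto (fun i => ∫ z in S, f i z ∂μ) U (nhds (∫ z in S, g z ∂μ))) hC hpi ?_ hlim ?_ ?_
  · simp only [setIntegral_empty]
    exact tendsto_const_nhds
  · intro S hS hSlim
    simp only [setIntegral_compl hS (hfi _), setIntegral_compl hS hgi]
    exact huniv.sub hSlim
  · intro S hdisj hS hSlim
    have hunion := fun {h : Ω → ℝ} (hi : Integrable h μ) =>
      (hasSum_integral_iUnion hS hdisj (hi.integrableOn (s := ⋃ n, S n))).tsum_eq
    simp only [← hunion (hfi _), ← hunion hgi]
    refine tendsto_tsum_of_dominated_convergence (bound := fun n => B * μ.real (S n))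
      (Summable.mul_left _ ?_) hSlim (Eventually.of_forall fun i n =>
        abs_setIntegral_le_of_abs_le (hfb i) (S n))
    exact ENNReal.summable_toReal (by
      rw [← measure_iUnion hdisj hS]
      exact measure_ne_top _ _)

lemma setIntegral_pi_prod [SigmaFinite μ] {κ : Type*} [Fintype κ] (h : Ω → ℝ) (s : κ → Set Ω) :
    ∫ y in Set.pi univ s, ∏ k, h (y k) ∂(Measure.pi fun _ : κ => μ)
      = ∏ k, ∫ z in s k, h z ∂μ := by
  rw [Measure.restrict_pi_pi]
  exact integral_fintype_prod_eq_prod (fun _ => h)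

lemma IsWeakLimit.pi_prod [IsFiniteMeasure μ] {κ : Type*} [Fintype κ]
    (h : IsWeakLimit μ U f g) (hf : ∀ i, Measurable (f i)) (hfb : ∀ i z, |f i z| ≤ 1)
    (hg : Measurable g) (hgb : ∀ z, |g z| ≤ 1) :
    IsWeakLimit (Measure.pi fun _ : κ => μ) U (fun i y => ∏ k, f i (y k))
      (fun y => ∏ k, g (y k)) := by
  have hprod : ∀ {h : Ω → ℝ}, (∀ z, |h z| ≤ 1) → ∀ y : κ → Ω, |∏ k, h (y k)| ≤ 1 :=
    fun hb y => by
      rw [Finset.abs_prod]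
      exact Finset.prod_le_one (fun _ _ => abs_nonneg _) fun k _ => hb (y k)
  have hmeas : ∀ {h : Ω → ℝ}, Measurable h → Measurable fun y : κ → Ω => ∏ k, h (y k) :=
    fun hm => Finset.measurable_fun_prod _ fun k _ => hm.comp (measurable_pi_apply k)
  have hbox : ∀ s : κ → Set Ω, (∀ k, MeasurableSet (s k)) →
      Tendsto (fun i => ∫ y in Set.pi univ s, ∏ k, f i (y k) ∂(Measure.pi fun _ : κ => μ)) U
        (nhds (∫ y in Set.pi univ s, ∏ k, g (y k) ∂(Measure.pi fun _ : κ => μ))) := fun s hs => by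
    simp only [setIntegral_pi_prod]
    exact tendsto_finsetProd _ fun k _ => h (s k) (hs k)
  refine .of_isPiSystem generateFrom_pi.symm isPiSystem_pi (fun i => hmeas (hf i))
    (fun i => hprod (hfb i)) (hmeas hg) (hprod hgb) ?_ ?_
  · simpa using hbox (fun _ => univ) fun _ => MeasurableSet.univ
  · rintro _ ⟨s, hs, rfl⟩
    exact hbox s fun k => hs k (mem_univ k)

end WeakLimits

section Alignment

variable {Ω ι : Type*} [MeasurableSpace Ω] {μ : Measure Ω}

lemma IsWeakLimit.measureReal_eq_zero_of_le [IsFiniteMeasure μ] {U : Filter ι} [NeBot U]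
    {f p : ι → Ω → ℝ} {g q : Ω → ℝ} {C : ℝ} {S : Set Ω} (hf : IsWeakLimit μ U f g)
    (hp : IsWeakLimit μ U p q) (hfi : ∀ i, Integrable (f i) μ) (hpi : ∀ i, Integrable (p i) μ)
    (hg : Integrable g μ) (hC : 0 ≤ C) (hS : MeasurableSet S) (hq : ∀ z ∈ S, q z ≤ 0)
    (hle : ∀ i, ∀ z ∈ S, f i z ≤ g z - 1 + C * p i z) : μ.real S = 0 := by
  have hlimit : ∫ z in S, g z ∂μ ≤ ∫ z in S, (g z - 1) ∂μ + C * ∫ z in S, q z ∂μ := by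
    refine le_of_tendsto_of_tendsto' (hf S hS) (((hp S hS).const_mul C).const_add _) fun i => ?_
    have hCp := (hpi i).const_mul C
    have hg1 : Integrable (fun z => g z - 1) μ := hg.sub (integrable_const 1)
    rw [← integral_const_mul, ← integral_add hg1.integrableOn hCp.integrableOn]
    exact setIntegral_mono_on (hfi i).integrableOn (hg1.add hCp).integrableOn hS (hle i)
  have hqS : C * ∫ z in S, q z ∂μ ≤ 0 :=
    mul_nonpos_of_nonneg_of_nonpos hC (setIntegral_nonpos hS hq)
  rw [integral_sub hg.integrableOn (integrable_const 1), setIntegral_const, smul_eq_mul,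
    mul_one] at hlimit
  exact le_antisymm (by linarith) measureReal_nonneg

lemma variance_le_sq_of_abs_le [IsProbabilityMeasure μ] {v : Ω → ℝ} {B : ℝ} (hm : Measurable v)
    (hb : ∀ z, |v z| ≤ B) : ProbabilityTheory.variance v μ ≤ B ^ 2 := by
  refine (ProbabilityTheory.variance_le_expectation_sq hm.aestronglyMeasurable).trans ?_
  have hmono : ∫ z, (v ^ 2) z ∂μ ≤ ∫ _, B ^ 2 ∂μ :=
    integral_mono_of_nonneg (ae_of_all _ fun z => sq_nonneg _) (integrable_const _)
      (ae_of_all _ fun z => sq_le_sq.mpr ((hb z).trans (le_abs_self B)))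
  simpa using hmono

lemma measureReal_pi_sum_le_integral_sub_one [IsProbabilityMeasure μ] {v : Ω → ℝ} {B : ℝ}
    (hm : Measurable v) (hb : ∀ z, |v z| ≤ B) {Q : ℕ} (hQ : 0 < Q) :
    (Measure.pi fun _ : Fin Q => μ).real {y | ∑ k, v (y k) ≤ Q * (∫ z, v z ∂μ - 1)}
      ≤ B ^ 2 / Q := by
  have hL : MemLp v 2 μ := MemLp.of_bound hm.aestronglyMeasurable B (ae_of_all _ hb)
  have hLk : ∀ k : Fin Q, MemLp (fun y : Fin Q → Ω => v (y k)) 2 (Measure.pi fun _ => μ) :=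
    fun k => hL.comp_measurePreserving (measurePreserving_eval (fun _ => μ) k)
  have hQ' : (0 : ℝ) < Q := by exact_mod_cast hQ
  have hmean : ∫ y, (∑ k : Fin Q, fun y : Fin Q → Ω => v (y k)) y ∂(Measure.pi fun _ => μ)
      = Q * ∫ z, v z ∂μ := by
    simp_rw [Finset.sum_apply]
    rw [integral_finsetSum _ fun k _ => (hLk k).integrable one_le_two]
    simp_rw [integral_comp_eval (μ := fun _ : Fin Q => μ) hm.aestronglyMeasurable]
    simp
  have hchebyshev := ProbabilityTheory.meas_ge_le_variance_div_sq
    (memLp_finsetSum' Finset.univ fun k _ => hLk k) hQ'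
  rw [ProbabilityTheory.variance_sum_pi fun _ => hL, hmean, Finset.sum_const, Finset.card_univ,
    Fintype.card_fin, nsmul_eq_mul] at hchebyshev
  refine ENNReal.toReal_le_of_le_ofReal (by positivity) ((measure_mono fun y hy => ?_).trans
    (hchebyshev.trans (ENNReal.ofReal_le_ofReal ?_)))
  · simp only [mem_ofPred_eq, Finset.sum_apply] at hy ⊢
    rw [abs_sub_comm]
    exact le_trans (by linarith) (le_abs_self _)
  · calc Q * ProbabilityTheory.variance v μ / (Q : ℝ) ^ 2
        = ProbabilityTheory.variance v μ / Q := by field_simp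
      _ ≤ B ^ 2 / Q := by gcongr; exact variance_le_sq_of_abs_le hm hb

lemma abs_max_zero_le {a B : ℝ} (h : |a| ≤ B) : |max a 0| ≤ B :=
  abs_max_le_max_abs_abs.trans (max_le h (by simpa using (abs_nonneg a).trans h))

lemma integral_max_zero {f : Ω → ℝ} (hf : Integrable f μ) :
    ∫ z, max (f z) 0 ∂μ = (∫ z, |f z| ∂μ + ∫ z, f z ∂μ) / 2 := by
  rw [← integral_add hf.abs hf, ← integral_div]
  refine integral_congr_ae (ae_of_all _ fun z => ?_)
  rcases le_total (f z) 0 with h | h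
  · simp [abs_of_nonpos h, h]
  · simp [abs_of_nonneg h, h]

variable {U : Ultrafilter ι} {h : ι → Ω → ℝ} {b p : Ω → ℝ} {B : ℝ}

-- Where `p ≤ 0`, the functions `h i` are asymptotically below `b - 2`; this contradicts
-- `max (h i) 0 → b` where `1 < b`, and `h i → 0` where `b ≤ 1`.
lemma ae_pos_of_isWeakLimit_indicator [IsFiniteMeasure μ] (hm : ∀ i, Measurable (h i))
    (hb : ∀ i z, |h i z| ≤ B) (hbm : Measurable b) (hbi : Integrable b μ) (hpm : Measurable p)
    (hnull : IsWeakLimit μ U h fun _ => 0)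
    (hpos : IsWeakLimit μ U (fun i z => max (h i z) 0) b)
    (hp : IsWeakLimit μ U (fun i => {z | b z - 2 ≤ h i z}.indicator 1) p) :
    ∀ᵐ z ∂μ, 0 < p z := by
  have hhi := fun i => integrable_of_abs_le (P := μ) (hm i) (hb i)
  have hind : ∀ i, Integrable ({z | b z - 2 ≤ h i z}.indicator (1 : Ω → ℝ)) μ := fun i =>
    (integrable_const 1).indicator (measurableSet_le (hbm.sub_const 2) (hm i))
  have hpS : MeasurableSet {z | p z ≤ 0} := measurableSet_le hpm measurable_const
  have hle : ∀ i z, h i z ≤ |B| := fun i z => (le_abs_self _).trans ((hb i z).trans (le_abs_self B))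
  have hon : ∀ {i z}, b z - 2 ≤ h i z → {z | b z - 2 ≤ h i z}.indicator (1 : Ω → ℝ) z = 1 :=
    fun hz => indicator_of_mem (s := {z | b z - 2 ≤ h _ z}) hz 1
  have hoff : ∀ {i z}, ¬b z - 2 ≤ h i z → {z | b z - 2 ≤ h i z}.indicator (1 : Ω → ℝ) z = 0 :=
    fun hz => indicator_of_notMem (s := {z | b z - 2 ≤ h _ z}) hz 1
  have hlarge : μ.real ({z | p z ≤ 0} ∩ {z | 1 < b z}) = 0 := by
    refine hpos.measureReal_eq_zero_of_le hp (fun i => (hhi i).pos_part) hind hbi (abs_nonneg B)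
      (hpS.inter (measurableSet_lt measurable_const hbm)) (fun z hz => hz.1) fun i z hz => ?_
    have hz1 : 1 < b z := hz.2
    by_cases hev : b z - 2 ≤ h i z
    · rw [hon hev]
      exact max_le (by linarith [hle i z]) (by linarith [abs_nonneg B])
    · rw [hoff hev]
      exact max_le (by linarith) (by linarith)
  have hsmall : μ.real ({z | p z ≤ 0} ∩ {z | b z ≤ 1}) = 0 := by
    refine hnull.measureReal_eq_zero_of_le hp hhi hind (integrable_const 0)
      (add_nonneg (abs_nonneg B) zero_le_one) (hpS.inter (measurableSet_le hbm measurable_const))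
      (fun z hz => hz.1) fun i z hz => ?_
    have hz1 : b z ≤ 1 := hz.2
    by_cases hev : b z - 2 ≤ h i z
    · rw [hon hev]
      linarith [hle i z]
    · rw [hoff hev]
      linarith
  rw [measureReal_eq_zero_iff] at hlarge hsmall
  refine measure_mono_null (fun z (hz : ¬0 < p z) => ?_) (measure_union_null hlarge hsmall)
  exact (lt_or_ge 1 (b z)).imp (⟨not_lt.mp hz, ·⟩) (⟨not_lt.mp hz, ·⟩)

lemma measureReal_eq_zero_of_isWeakLimit_zero [IsFiniteMeasure μ] {f : ι → Ω → ℝ} {g : Ω → ℝ}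
    {S : Set Ω} (hfg : IsWeakLimit μ U f g) (hg : Integrable g μ) (hpos : ∀ᵐ z ∂μ, 0 < g z)
    (hS : MeasurableSet S) (hzero : ∀ i, ∀ z ∈ S, f i z = 0) : μ.real S = 0 := by
  have hint : ∫ z in S, g z ∂μ = 0 := by
    refine tendsto_nhds_unique (hfg S hS) (tendsto_const_nhds.congr fun i => ?_)
    exact (setIntegral_eq_zero_of_forall_eq_zero (hzero i)).symm
  have hg0 := (setIntegral_eq_zero_iff_of_nonneg_ae
    (ae_restrict_of_ae (hpos.mono fun z hz => hz.le)) hg.integrableOn).mp hint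
  have hfalse : ∀ᵐ _z ∂μ.restrict S, False := by
    filter_upwards [hg0, ae_restrict_of_ae hpos] with z hz hz' using hz'.ne' hz
  rw [measureReal_eq_zero_iff, ← Measure.restrict_eq_zero, ← ae_eq_bot]
  exact eventually_false_iff_eq_bot.mp hfalse

lemma ae_pi_exists_forall_le [IsProbabilityMeasure μ] [Countable ι] (hm : ∀ i, Measurable (h i))
    (hb : ∀ i z, |h i z| ≤ B) (hbm : Measurable b) (hbi : Integrable b μ)
    (hnull : IsWeakLimit μ U h fun _ => 0)
    (hpos : IsWeakLimit μ U (fun i z => max (h i z) 0) b) {κ : Type*} [Fintype κ] :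
    ∀ᵐ y ∂Measure.pi fun _ : κ => μ, ∃ i, ∀ k, b (y k) - 2 ≤ h i (y k) := by
  have hev : ∀ i, MeasurableSet {z | b z - 2 ≤ h i z} := fun i =>
    measurableSet_le (hbm.sub_const 2) (hm i)
  have hmi : ∀ i, Measurable ({z | b z - 2 ≤ h i z}.indicator (1 : Ω → ℝ)) := fun i =>
    measurable_one.indicator (hev i)
  have hind : ∀ i z, |{z | b z - 2 ≤ h i z}.indicator (1 : Ω → ℝ) z| ≤ 1 := fun i z => by
    rw [← Real.norm_eq_abs]
    exact (norm_indicator_le_norm_self _ z).trans_eq norm_one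
  obtain ⟨p, hpm, hpb, hp⟩ := exists_isWeakLimit (μ := μ) U hmi hind
  have hppos := ae_pos_of_isWeakLimit_indicator hm hb hbm hbi hpm hnull hpos hp
  have hprod : ∀ᵐ y ∂Measure.pi fun _ : κ => μ, 0 < ∏ k, p (y k) := by
    filter_upwards [eventually_all.mpr fun k =>
      (measurePreserving_eval (fun _ : κ => μ) k).quasiMeasurePreserving.ae hppos] with y hy
    exact Finset.prod_pos fun k _ => hy k
  have hprodi : Integrable (fun y : κ → Ω => ∏ k, p (y k)) (Measure.pi fun _ => μ) :=
    Integrable.fintype_prod fun _ => integrable_of_abs_le hpm hpb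
  have hmeas : MeasurableSet {y : κ → Ω | ∃ i, ∀ k, b (y k) - 2 ≤ h i (y k)} := by
    simp only [ofPred_exists, ofPred_forall]
    exact MeasurableSet.iUnion fun i => MeasurableSet.iInter fun k =>
      (hev i).preimage (measurable_pi_apply k)
  refine (measureReal_eq_zero_iff).mp (measureReal_eq_zero_of_isWeakLimit_zero
    (hp.pi_prod hmi hind hpm hpb) hprodi hprod hmeas.compl fun i y hy => ?_)
  obtain ⟨k, hk⟩ := not_forall.mp (not_exists.mp hy i)
  exact Finset.prod_eq_zero (Finset.mem_univ k)
    (indicator_of_notMem (s := {z | b z - 2 ≤ h i z}) hk 1)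

lemma le_integral_weakLimit_max_zero [IsProbabilityMeasure μ] {A : ℝ} (hm : ∀ i, Measurable (h i))
    (hb : ∀ i z, |h i z| ≤ B) (hnull : IsWeakLimit μ U h fun _ => 0)
    (hpos : IsWeakLimit μ U (fun i z => max (h i z) 0) b)
    (hA : ∀ᶠ i in U, A ≤ ∫ z, |h i z| ∂μ) : A / 2 ≤ ∫ z, b z ∂μ := by
  have hmax := hpos univ MeasurableSet.univ
  have hmean := (hnull univ MeasurableSet.univ).div_const 2
  simp only [setIntegral_univ, integral_zero, zero_div] at hmax hmean
  have hdiff := hmax.sub hmean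
  rw [sub_zero] at hdiff
  refine ge_of_tendsto hdiff (hA.mono fun i hi => ?_)
  rw [integral_max_zero (integrable_of_abs_le (hm i) (hb i))]
  linarith

lemma one_sub_le_measureReal_pi_exists_le_sum [IsProbabilityMeasure μ] {h : ℕ → Ω → ℝ} {A : ℝ}
    (hm : ∀ i, Measurable (h i)) (hb : ∀ i z, |h i z| ≤ B)
    (hnull : IsWeakLimit μ atTop h fun _ => 0) (hA : ∃ᶠ i in atTop, A ≤ ∫ z, |h i z| ∂μ)
    {Q : ℕ} (hQ : 0 < Q) :
    1 - B ^ 2 / Q ≤ (Measure.pi fun _ : Fin Q => μ).real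
      {y | ∃ i, Q * (A / 2 - 3) ≤ ∑ k, h i (y k)} := by
  have hne : NeBot (atTop ⊓ principal {i | A ≤ ∫ z, |h i z| ∂μ}) := frequently_mem_iff_neBot.mp hA
  have hU := Ultrafilter.of_le (atTop ⊓ principal {i | A ≤ ∫ z, |h i z| ∂μ})
  set U := Ultrafilter.of (atTop ⊓ principal {i | A ≤ ∫ z, |h i z| ∂μ})
  have hnullU : IsWeakLimit μ U h fun _ => 0 := fun S hS =>
    (hnull S hS).mono_left (hU.trans inf_le_left)
  obtain ⟨b, hbm, hbb, hpos⟩ := exists_isWeakLimit (μ := μ) U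
    (fun i => (hm i).max measurable_const) fun i z => abs_max_zero_le (hb i z)
  have hmean := le_integral_weakLimit_max_zero hm hb hnullU hpos
    (le_principal_iff.mp (hU.trans inf_le_right))
  have haligned := ae_pi_exists_forall_le (κ := Fin Q) hm hb hbm
    (integrable_of_abs_le hbm hbb) hnullU hpos
  have hchebyshev := measureReal_pi_sum_le_integral_sub_one (μ := μ) hbm hbb hQ
  set ν := Measure.pi fun _ : Fin Q => μ
  have hdev : MeasurableSet {y : Fin Q → Ω | ∑ k, b (y k) ≤ Q * (∫ z, b z ∂μ - 1)} :=
    measurableSet_le (Finset.measurable_fun_sum _ fun k _ => hbm.comp (measurable_pi_apply k))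
      measurable_const
  calc 1 - B ^ 2 / Q ≤ ν.real {y | ∑ k, b (y k) ≤ Q * (∫ z, b z ∂μ - 1)}ᶜ := by
        rw [probReal_compl_eq_one_sub hdev]
        linarith
    _ ≤ ν.real {y | ∃ i, Q * (A / 2 - 3) ≤ ∑ k, h i (y k)} := by
        refine ENNReal.toReal_mono (measure_ne_top _ _) (measure_mono_ae ?_)
        filter_upwards [haligned] with y ⟨i, hi⟩ hy
        refine ⟨i, ?_⟩
        calc Q * (A / 2 - 3) ≤ Q * (∫ z, b z ∂μ - 3) := by gcongr
          _ ≤ ∑ k, (b (y k) - 2) := by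
              have hlt := not_le.mp (show ¬∑ k, b (y k) ≤ Q * (∫ z, b z ∂μ - 1) from hy)
              simp only [Finset.sum_sub_distrib, Finset.sum_const, Finset.card_univ,
                Fintype.card_fin, nsmul_eq_mul]
              linarith
          _ ≤ ∑ k, h i (y k) := Finset.sum_le_sum fun k _ => hi k

end Alignment

section Configurations

variable {Ω : Type*} {φ : ℕ → Ω → ℝ}

/-- The partial sum `∑_{n < m} c_n φ_n(x)` of an arbitrary series with respect to `φ`. -/
def expansionSum (φ : ℕ → Ω → ℝ) (c : ℕ → ℝ) (m : ℕ) (x : Ω) : ℝ :=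
  ∑ n ∈ Finset.range m, c n * φ n x

lemma sum_kernelBlock_eq {κ : Type*} [Fintype κ] (q : ℝ) (m j : ℕ) (x : Ω) (y : κ → Ω) :
    (∑ k, kernelBlock φ m j x (y k)) / q =
      expansionSum φ (fun n => (∑ k, φ n (y k)) / q) (m + j) x
        - expansionSum φ (fun n => (∑ k, φ n (y k)) / q) m x := by
  simp only [expansionSum, kernelBlock, Finset.sum_range_add, add_sub_cancel_left]
  rw [Finset.sum_comm, Finset.sum_div]
  refine Finset.sum_congr rfl fun n _ => ?_
  rw [← Finset.mul_sum]
  ring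

variable [MeasurableSpace Ω] {μ : Measure Ω} {M : ℝ}

lemma measurable_expansionSum (hφ : ∀ n, Measurable (φ n)) (c : ℕ → ℝ) (m : ℕ) :
    Measurable (expansionSum φ c m) :=
  Finset.measurable_fun_sum _ fun n _ => (hφ n).const_mul (c n)

lemma exists_notMem_le_measureReal_section {α β : Type*} [MeasurableSpace α] [MeasurableSpace β]
    {μ : Measure α} {ν : Measure β} [IsProbabilityMeasure μ] [IsProbabilityMeasure ν]
    {E : Set (α × β)} (hE : MeasurableSet E) {N : Set β} (hN : ν N = 0) {δ ε : ℝ} (hε : 0 ≤ ε)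
    (hδ : δ ≤ μ.real {x | ε ≤ ν.real {y | (x, y) ∈ E}}) :
    ∃ y ∉ N, ε * δ ≤ μ.real {x | (x, y) ∈ E} := by
  have hint : Integrable (E.indicator 1 : α × β → ℝ) (μ.prod ν) := (integrable_const 1).indicator hE
  have hleft : ∀ x, ∫ y, E.indicator (1 : α × β → ℝ) (x, y) ∂ν = ν.real {y | (x, y) ∈ E} :=
    fun x => integral_indicator_one (s := {y | (x, y) ∈ E}) (measurable_prodMk_left hE)
  have hright : ∀ y, ∫ x, E.indicator (1 : α × β → ℝ) (x, y) ∂μ = μ.real {x | (x, y) ∈ E} :=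
    fun y => integral_indicator_one (s := {x | (x, y) ∈ E}) (measurable_prodMk_right hE)
  obtain ⟨y, hy, hle⟩ := exists_notMem_null_integral_le hint.integral_prod_right hN
  refine ⟨y, hy, ?_⟩
  calc ε * δ ≤ ε * μ.real {x | ε ≤ ν.real {y | (x, y) ∈ E}} := by gcongr
    _ ≤ ∫ x, ν.real {y | (x, y) ∈ E} ∂μ :=
        mul_meas_ge_le_integral_of_nonneg (ae_of_all _ fun x => measureReal_nonneg)
          (by simpa only [hleft] using hint.integral_prod_left) ε
    _ = ∫ y, ∫ x, E.indicator (1 : α × β → ℝ) (x, y) ∂μ ∂ν := by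
        rw [← integral_integral_swap (f := fun x y => E.indicator (1 : α × β → ℝ) (x, y)) hint]
        simp only [hleft]
    _ ≤ μ.real {x | (x, y) ∈ E} := by rwa [← hright]

lemma exists_le_measureReal_exists_le_abs [IsFiniteMeasure μ] {T : ℕ → Ω → ℝ} {A δ : ℝ}
    (hδ : δ < μ.real {x | ∃ m, A ≤ |T m x|}) : ∃ N, δ ≤ μ.real {x | ∃ m ≤ N, A ≤ |T m x|} := by
  have hmono : Monotone fun N => {x | ∃ m ≤ N, A ≤ |T m x|} :=
    fun N N' hN x ⟨m, hm, hx⟩ => ⟨m, hm.trans hN, hx⟩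
  have hunion : {x | ∃ m, A ≤ |T m x|} = ⋃ N, {x | ∃ m ≤ N, A ≤ |T m x|} := by
    ext x
    simpa using ⟨fun ⟨m, hm⟩ => ⟨m, m, le_rfl, hm⟩, fun ⟨_, m, _, hm⟩ => ⟨m, hm⟩⟩
  have hlim : Tendsto (fun N => μ.real {x | ∃ m ≤ N, A ≤ |T m x|}) atTop
      (nhds (μ.real {x | ∃ m, A ≤ |T m x|})) := by
    rw [hunion]
    exact (ENNReal.tendsto_toReal (measure_ne_top _ _)).comp (tendsto_measure_iUnion_atTop hmono)
  exact (hlim.eventually_const_lt hδ).exists.imp fun N => le_of_lt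

namespace IsBddONS

lemma measurableSet_exists_le_sum_kernelBlock (h : IsBddONS μ M φ) (C : ℝ) (Q : ℕ) :
    MeasurableSet {z : Ω × (Fin Q → Ω) | ∃ m j, C ≤ (∑ k, kernelBlock φ m j z.1 (z.2 k)) / Q} := by
  simp only [ofPred_exists]
  refine MeasurableSet.iUnion fun m => MeasurableSet.iUnion fun j =>
    measurableSet_le measurable_const (Measurable.div_const (Finset.measurable_fun_sum _
      fun k _ => ?_) _)
  exact (h.measurable_kernelBlock m j).comp
    (measurable_fst.prodMk ((measurable_pi_apply k).comp measurable_snd))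

variable [IsProbabilityMeasure μ]

lemma half_le_measureReal_pi_sum_kernelBlock (h : IsBddONS μ M φ) {x : Ω} {C : ℝ} {J Q : ℕ}
    (hx : ∃ᶠ m in atTop, ∃ j ≤ J, 2 * C + 6 ≤ ∫ y, |kernelBlock φ m j x y| ∂μ)
    (hQ : 0 < Q) (hJQ : (M ^ 2 * J) ^ 2 / Q ≤ 1 / 2) :
    1 / 2 ≤ (Measure.pi fun _ : Fin Q => μ).real
      {y | ∃ m j, C ≤ (∑ k, kernelBlock φ m j x (y k)) / Q} := by
  have hchoice : ∀ m, ∃ j ≤ J, (∃ j ≤ J, 2 * C + 6 ≤ ∫ y, |kernelBlock φ m j x y| ∂μ) →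
      2 * C + 6 ≤ ∫ y, |kernelBlock φ m j x y| ∂μ := fun m => by
    by_cases hm : ∃ j ≤ J, 2 * C + 6 ≤ ∫ y, |kernelBlock φ m j x y| ∂μ
    · exact hm.imp fun j hj => ⟨hj.1, fun _ => hj.2⟩
    · exact ⟨0, J.zero_le, fun h => absurd h hm⟩
  choose j hjJ hj using hchoice
  have hbound : ∀ m y, |kernelBlock φ m (j m) x y| ≤ M ^ 2 * J := fun m y =>
    (h.abs_kernelBlock_le m (j m) x y).trans (by gcongr; exact hjJ m)
  have hnull : IsWeakLimit μ atTop (fun m => kernelBlock φ m (j m) x) fun _ => 0 := fun S hS => by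
    simpa using h.tendsto_setIntegral_kernelBlock hS hjJ x
  have haligned := one_sub_le_measureReal_pi_exists_le_sum
    (fun m => (h.measurable_kernelBlock m (j m)).comp measurable_prodMk_left) hbound hnull
    (hx.mono hj) hQ
  refine le_trans (by linarith) (haligned.trans (measureReal_mono ?_ (measure_ne_top _ _)))
  rintro y ⟨m, hm⟩
  refine ⟨m, j m, ?_⟩
  rw [le_div_iff₀ (by exact_mod_cast hQ)]
  calc C * Q = Q * ((2 * C + 6) / 2 - 3) := by ring
    _ ≤ ∑ k, kernelBlock φ m (j m) x (y k) := hm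

lemma exists_configuration (h : IsBddONS μ M φ) {good : Ω → Prop} (hgood : ∀ᵐ z ∂μ, good z)
    {A : ℝ} (hA : 0 ≤ A) :
    ∃ Q : ℕ, 0 < Q ∧ ∃ y : Fin Q → Ω, (∀ k, good (y k)) ∧ ∃ N, 1 / (8 * M ^ 2) ≤
      μ.real {x | ∃ m ≤ N, A ≤ |expansionSum φ (fun n => (∑ k, φ n (y k)) / Q) m x|} := by
  have hM := h.pos
  obtain ⟨J, hJ⟩ := h.exists_le_measureReal_frequently (A := 2 * (2 * A) + 6) (by linarith)
  obtain ⟨Q, hQ⟩ := exists_nat_gt (2 * (M ^ 2 * J) ^ 2)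
  have hQ0 : (0 : ℝ) < Q := lt_of_le_of_lt (by positivity) hQ
  have hJQ : (M ^ 2 * J) ^ 2 / Q ≤ 1 / 2 := by rw [div_le_iff₀ hQ0]; linarith
  have hgood' : ∀ᵐ y ∂Measure.pi fun _ : Fin Q => μ, ∀ k, good (y k) := ae_all_iff.mpr fun k =>
    (measurePreserving_eval (fun _ : Fin Q => μ) k).quasiMeasurePreserving.ae hgood
  have hlarge := hJ.trans (measureReal_mono (fun x hx =>
    h.half_le_measureReal_pi_sum_kernelBlock hx (by exact_mod_cast hQ0) hJQ) (measure_ne_top _ _))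
  obtain ⟨y, hy, hmeas⟩ := exists_notMem_le_measureReal_section
    (h.measurableSet_exists_le_sum_kernelBlock (2 * A) Q) (ae_iff.mp hgood') one_half_pos.le hlarge
  refine ⟨Q, by exact_mod_cast hQ0, y, not_not.mp hy, exists_le_measureReal_exists_le_abs ?_⟩
  calc 1 / (8 * M ^ 2) < 1 / 2 * (1 / (2 * M ^ 2)) := by
        rw [div_mul_div_comm, one_mul]
        exact one_div_lt_one_div_of_lt (by positivity) (by nlinarith [sq_pos_of_pos hM])
    _ ≤ _ := hmeas
    _ ≤ _ := measureReal_mono ?_ (measure_ne_top _ _)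
  rintro x ⟨m, j, hmj : 2 * A ≤ (∑ k, kernelBlock φ m j x (y k)) / Q⟩
  rw [sum_kernelBlock_eq] at hmj
  by_contra hsmall
  have habs := fun m => abs_lt.mp (not_le.mp (not_exists.mp hsmall m))
  linarith [(habs (m + j)).2, (habs m).1]

end IsBddONS

end Configurations

section SmallSets

lemma continuous_measureReal_Iic (ν : Measure ℝ) [IsFiniteMeasure ν] [NullSingletonClass ν] :
    Continuous fun x => ν.real (Iic x) := by
  have hsub : ∀ x, ∫ _ in (0 : ℝ)..x, (1 : ℝ) ∂ν = ν.real (Iic x) - ν.real (Iic 0) := fun x => by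
    rw [← intervalIntegral.integral_Iic_sub_Iic integrableOn_const integrableOn_const]
    simp
  have hprimitive := (integrable_const (μ := ν) (1 : ℝ)).continuous_primitive 0
  simpa only [hsub, sub_add_cancel] using hprimitive.add_const (ν.real (Iic 0))

lemma exists_subset_measureReal_eq {μ : Measure ℝ} [IsFiniteMeasure μ] [NullSingletonClass μ]
    {S : Set ℝ} (hS : MeasurableSet S) {s : ℝ} (hs0 : 0 < s) (hs : s < μ.real S) :
    ∃ E ⊆ S, MeasurableSet E ∧ μ.real E = s := by
  have hreal : ∀ x, (μ.restrict S).real (Iic x) = μ.real (Iic x ∩ S) := fun x =>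
    measureReal_restrict_apply measurableSet_Iic
  have hbot : Tendsto (fun x => (μ.restrict S).real (Iic x)) atBot (nhds 0) := by
    have h := tendsto_measure_iInter_atBot (μ := μ.restrict S)
      (fun _ => measurableSet_Iic.nullMeasurableSet) (monotone_Iic (α := ℝ)) ⟨0, measure_ne_top _ _⟩
    rw [(iInter_Iic_eq_empty_iff (f := fun x : ℝ => x)).mpr (by simp), measure_empty] at h
    exact (ENNReal.tendsto_toReal ENNReal.zero_ne_top).comp h
  have htop : Tendsto (fun x => (μ.restrict S).real (Iic x)) atTop (nhds (μ.real S)) := by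
    have h := (ENNReal.tendsto_toReal (measure_ne_top _ _)).comp
      (tendsto_measure_Iic_atTop (μ.restrict S))
    rwa [Measure.restrict_apply_univ] at h
  obtain ⟨x, hx⟩ := mem_range_of_exists_le_of_exists_ge
    (continuous_measureReal_Iic (μ.restrict S))
    (hbot.eventually_le_const hs0).exists (htop.eventually_const_le hs).exists
  exact ⟨Iic x ∩ S, inter_subset_right, measurableSet_Iic.inter hS, (hreal x).symm.trans hx⟩

lemma exists_pairwise_disjoint_subsets {μ : Measure ℝ} [IsFiniteMeasure μ] [NullSingletonClass μ]
    {s : ℝ} (hs0 : 0 < s) {Q : ℕ} {S : Fin Q → Set ℝ} (hS : ∀ k, MeasurableSet (S k))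
    (hs : ∀ k, Q * s < μ.real (S k)) :
    ∃ E : Fin Q → Set ℝ, (∀ k, E k ⊆ S k) ∧ (∀ k, MeasurableSet (E k)) ∧
      (∀ k, μ.real (E k) = s) ∧ Pairwise (Function.onFun Disjoint E) := by
  induction Q with
  | zero => exact ⟨fun _ => ∅, by simp, by simp, fun k => k.elim0, fun k => k.elim0⟩
  | succ Q ih =>
    push_cast at hs
    obtain ⟨E, hES, hE, hEs, hdisj⟩ := ih (fun k => hS k.castSucc)
      fun k => (by linarith [hs k.castSucc])
    have hunion : μ.real (⋃ k, E k) ≤ Q * s :=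
      (measureReal_iUnion_fintype_le E).trans_eq (by simp [hEs])
    have hroom : s < μ.real (S (Fin.last Q) \ ⋃ k, E k) := by
      linarith [le_measureReal_sdiff (μ := μ) (s₁ := S (Fin.last Q)) (s₂ := ⋃ k, E k),
        hs (Fin.last Q)]
    obtain ⟨E', hE'S, hE', hE's⟩ := exists_subset_measureReal_eq
      ((hS (Fin.last Q)).diff (MeasurableSet.iUnion hE)) hs0 hroom
    have hnew : ∀ k, Disjoint (E k) E' := fun k =>
      (disjoint_sdiff_right.mono_left (subset_iUnion E k)).mono_right hE'S
    refine ⟨Fin.snoc E E', ?_, ?_, ?_, ?_⟩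
    · exact Fin.lastCases (by simpa using hE'S.trans sdiff_subset) (by simpa using hES)
    · exact Fin.lastCases (by simpa using hE') (by simpa using hE)
    · exact Fin.lastCases (by simpa using hE's) (by simpa using hEs)
    · intro k l
      induction k using Fin.lastCases <;> induction l using Fin.lastCases
      · simp
      · simpa [Function.onFun] using fun _ => (hnew _).symm
      · simpa [Function.onFun] using hnew _
      · simpa [Function.onFun] using @hdisj _ _

lemma ae_pos_measure_forall_abs_sub_lt {Ω : Type*} [MeasurableSpace Ω] {μ : Measure Ω}
    {φ : ℕ → Ω → ℝ} (hφ : ∀ n, Measurable (φ n)) :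
    ∀ᵐ x ∂μ, ∀ (N : ℕ) (η : ℝ), 0 < η → 0 < μ {z | ∀ n < N, |φ n z - φ n x| < η} := by
  have hmeas : Measurable fun x n => φ n x := measurable_pi_lambda _ hφ
  filter_upwards [ae_of_ae_map hmeas.aemeasurable
    (Measure.support_mem_ae (μ := μ.map fun x n => φ n x))] with x hx N η hη
  have hopen : IsOpen {w : ℕ → ℝ | ∀ n < N, |w n - φ n x| < η} := by
    have hinter : {w : ℕ → ℝ | ∀ n < N, |w n - φ n x| < η}
        = ⋂ n ∈ Finset.range N, {w : ℕ → ℝ | |w n - φ n x| < η} := by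
      ext w
      simp
    rw [hinter]
    exact isOpen_biInter_finset fun n _ => isOpen_lt (by fun_prop) continuous_const
  have hpos := (Measure.mem_support_iff_forall _).mp hx _ (hopen.mem_nhds (by simp [hη]))
  rwa [Measure.map_apply hmeas hopen.measurableSet] at hpos

lemma abs_expansionSum_sub_le {Ω : Type*} {φ : ℕ → Ω → ℝ} {M η : ℝ} {x : Ω} {c d : ℕ → ℝ} {m : ℕ}
    (hφ : ∀ n, |φ n x| ≤ M) (hcd : ∀ n < m, |c n - d n| ≤ η) :
    |expansionSum φ c m x - expansionSum φ d m x| ≤ m * (η * M) :=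
  calc |expansionSum φ c m x - expansionSum φ d m x|
      = |∑ n ∈ Finset.range m, (c n - d n) * φ n x| := by
        simp only [expansionSum, sub_mul, Finset.sum_sub_distrib]
    _ ≤ ∑ n ∈ Finset.range m, |c n - d n| * |φ n x| := by
        simpa only [abs_mul] using Finset.abs_sum_le_sum_abs (fun n => (c n - d n) * φ n x) _
    _ ≤ ∑ _n ∈ Finset.range m, η * M := Finset.sum_le_sum fun n hn =>
        have hn := hcd n (Finset.mem_range.mp hn)
        mul_le_mul hn (hφ n) (abs_nonneg _) ((abs_nonneg _).trans hn)
    _ = m * (η * M) := by simp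

lemma measureReal_exists_le_abs_expansionSum_le {Ω : Type*} [MeasurableSpace Ω] {μ : Measure Ω}
    [IsFiniteMeasure μ] {φ : ℕ → Ω → ℝ} {M η A : ℝ} {c d : ℕ → ℝ} {N : ℕ}
    (hφ : ∀ n x, |φ n x| ≤ M) (hcd : ∀ n < N, |c n - d n| ≤ η) (hN : N * (η * M) ≤ 1) :
    μ.real {x | ∃ m ≤ N, A + 1 ≤ |expansionSum φ c m x|} ≤
      μ.real {x | ∃ m ≤ N, A ≤ |expansionSum φ d m x|} := by
  refine measureReal_mono ?_ (measure_ne_top _ _)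
  rintro x ⟨m, hm, hx⟩
  refine ⟨m, hm, ?_⟩
  have hsub : |expansionSum φ c m x - expansionSum φ d m x| ≤ 1 := by
    rcases Nat.eq_zero_or_pos m with rfl | hm0
    · simp [expansionSum]
    · have hηM : 0 ≤ η * M := mul_nonneg ((abs_nonneg _).trans (hcd 0 (hm0.trans_le hm)))
        ((abs_nonneg _).trans (hφ 0 x))
      calc |expansionSum φ c m x - expansionSum φ d m x| ≤ m * (η * M) :=
            abs_expansionSum_sub_le (fun n => hφ n x) fun n hn => hcd n (hn.trans_le hm)
        _ ≤ N * (η * M) := by gcongr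
        _ ≤ 1 := hN
  linarith [abs_sub_abs_le_abs_sub (expansionSum φ c m x) (expansionSum φ d m x)]

/-- The coefficients of `t⁻¹ 1_E` with respect to `φ`. -/
noncomputable def indicatorCoef {Ω : Type*} [MeasurableSpace Ω] (μ : Measure Ω) (φ : ℕ → Ω → ℝ)
    (E : Set Ω) (t : ℝ) (n : ℕ) : ℝ :=
  (∫ z in E, φ n z ∂μ) / t

lemma abs_setIntegral_sub_mul_le {Ω : Type*} [MeasurableSpace Ω] {μ : Measure Ω}
    [IsFiniteMeasure μ] {f : Ω → ℝ} (hf : Integrable f μ) {E : Set Ω}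
    {a η : ℝ} (hη : ∀ z ∈ E, |f z - a| ≤ η) :
    |∫ z in E, f z ∂μ - μ.real E * a| ≤ η * μ.real E := by
  have hsub : ∫ z in E, f z ∂μ - μ.real E * a = ∫ z in E, (f z - a) ∂μ := by
    rw [integral_sub hf.integrableOn (integrable_const a), setIntegral_const, smul_eq_mul]
  rw [hsub]
  exact norm_setIntegral_le_of_norm_le_const (f := fun z => f z - a) (measure_lt_top _ _) hη

lemma abs_indicatorCoef_iUnion_sub_le {Ω : Type*} [MeasurableSpace Ω] {μ : Measure Ω}
    [IsFiniteMeasure μ] {φ : ℕ → Ω → ℝ} {n : ℕ} (hφ : Integrable (φ n) μ) {Q : ℕ} (hQ : 0 < Q)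
    {s η : ℝ} (hs : 0 < s) {E : Fin Q → Set Ω} (hE : ∀ k, MeasurableSet (E k))
    (hdisj : Pairwise (Function.onFun Disjoint E)) (hEs : ∀ k, μ.real (E k) = s) {y : Fin Q → Ω}
    (hη : ∀ k, ∀ z ∈ E k, |φ n z - φ n (y k)| ≤ η) :
    |(∑ k, φ n (y k)) / Q - indicatorCoef μ φ (⋃ k, E k) (Q * s) n| ≤ η := by
  have hQs : 0 < Q * s := by positivity
  have hsum : (∑ k, φ n (y k)) / Q - indicatorCoef μ φ (⋃ k, E k) (Q * s) n
      = -(∑ k, (∫ z in E k, φ n z ∂μ - s * φ n (y k))) / (Q * s) := by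
    rw [indicatorCoef, integral_iUnion_fintype hE hdisj fun k => hφ.integrableOn,
      Finset.sum_sub_distrib, ← Finset.mul_sum]
    field_simp
    ring
  rw [hsum, abs_div, abs_neg, abs_of_pos hQs, div_le_iff₀ hQs]
  calc |∑ k, (∫ z in E k, φ n z ∂μ - s * φ n (y k))|
      ≤ ∑ k, |∫ z in E k, φ n z ∂μ - s * φ n (y k)| := Finset.abs_sum_le_sum_abs _ _
    _ ≤ ∑ _k : Fin Q, η * s := Finset.sum_le_sum fun k _ => by
        simpa only [hEs] using abs_setIntegral_sub_mul_le hφ (hη k)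
    _ = η * (Q * s) := by simp; ring

-- The points of a configuration are replaced by small sets on which `φ_0, …, φ_{N-1}` are almost
-- constant; such sets exist around almost every point.
lemma IsBddONS.exists_small_sets {μ : Measure ℝ} [IsProbabilityMeasure μ] [NullSingletonClass μ]
    {M : ℝ} {φ : ℕ → ℝ → ℝ} (h : IsBddONS μ M φ) {A : ℝ} (hA : 0 ≤ A) :
    ∃ N : ℕ, ∀ᶠ t in nhdsWithin 0 (Ioi (0 : ℝ)), ∃ E : Set ℝ, MeasurableSet E ∧ μ.real E ≤ t ∧
      1 / (8 * M ^ 2) ≤ μ.real {x | ∃ m ≤ N, A ≤ |expansionSum φ (indicatorCoef μ φ E t) m x|} := by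
  have hM := h.pos
  obtain ⟨Q, hQ, y, hy, N, hN⟩ := h.exists_configuration
    (ae_pos_measure_forall_abs_sub_lt h.measurable) (add_nonneg hA one_pos.le)
  set η : ℝ := 1 / (M * (N + 1)) with hη
  have hη0 : 0 < η := by positivity
  have hηN : N * (η * M) ≤ 1 := by
    rw [hη, show (N : ℝ) * (1 / (M * (N + 1)) * M) = N / (N + 1) by field_simp]
    exact (div_le_one (by positivity)).mpr (by linarith)
  have hmeas : ∀ k, MeasurableSet {z | ∀ n < N, |φ n z - φ n (y k)| < η} := fun k => by
    simp only [ofPred_forall]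
    exact MeasurableSet.iInter fun n => MeasurableSet.iInter fun _ =>
      measurableSet_lt ((h.measurable n).sub_const _).abs measurable_const
  have hsmall : ∀ᶠ t in nhdsWithin 0 (Ioi (0 : ℝ)), ∀ k,
      t < μ.real {z | ∀ n < N, |φ n z - φ n (y k)| < η} := by
    refine eventually_all.mpr fun k => nhdsWithin_le_nhds (gt_mem_nhds ?_)
    exact ENNReal.toReal_pos (hy k N η hη0).ne' (measure_ne_top _ _)
  refine ⟨N, ?_⟩
  filter_upwards [hsmall, self_mem_nhdsWithin] with t ht (ht0 : 0 < t)
  have hQ' : (0 : ℝ) < Q := by exact_mod_cast hQ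
  have hQt : Q * (t / Q) = t := mul_div_cancel₀ t hQ'.ne'
  obtain ⟨E, hES, hE, hEs, hdisj⟩ :=
    exists_pairwise_disjoint_subsets (div_pos ht0 hQ') hmeas (by simpa only [hQt] using ht)
  refine ⟨⋃ k, E k, MeasurableSet.iUnion hE, ?_, hN.trans ?_⟩
  · exact (measureReal_iUnion_fintype_le E).trans_eq (by simp [hEs, hQt])
  · refine measureReal_exists_le_abs_expansionSum_le h.abs_le (fun n hn => ?_) hηN
    have hcoef := abs_indicatorCoef_iUnion_sub_le (h.integrable n) hQ (div_pos ht0 hQ') hE hdisj hEs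
      fun k z hz => (hES k hz n hn).le
    rwa [hQt] at hcoef

end SmallSets

section ResonantSets

lemma exists_rapidly_decreasing_seq {P : ℕ → ℝ → Prop}
    (hP : ∀ k, ∃ᶠ t in nhdsWithin 0 (Ioi (0 : ℝ)), P k t) (K : ℕ → ℝ) :
    ∃ t : ℕ → ℝ, (∀ k, P k (t k)) ∧ (∀ k, 0 < t k) ∧ ∀ k, K k * t (k + 1) ≤ t k := by
  have hstep : ∀ k b, 0 < b → ∃ t, P k t ∧ 0 < t ∧ K (k - 1) * t ≤ b := fun k b hb => by
    have hlim : Tendsto (fun t => K (k - 1) * t) (nhdsWithin 0 (Ioi 0)) (nhds 0) :=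
      (Continuous.tendsto' (by fun_prop) 0 0 (mul_zero _)).mono_left nhdsWithin_le_nhds
    obtain ⟨t, ht, htb, ht0⟩ := ((hP k).and_eventually
      ((hlim.eventually_le_const hb).and self_mem_nhdsWithin)).exists
    exact ⟨t, ht, ht0, htb⟩
  choose! g hgP hg0 hgb using hstep
  let t : ℕ → ℝ := fun k => Nat.rec (g 0 1) (fun k u => g (k + 1) u) k
  have hpos : ∀ k, 0 < t k := fun k => by
    induction k with
    | zero => exact hg0 0 1 one_pos
    | succ k ih => exact hg0 (k + 1) (t k) ih
  refine ⟨t, fun k => ?_, hpos, fun k => hgb (k + 1) (t k) (hpos k)⟩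
  cases k with
  | zero => exact hgP 0 1 one_pos
  | succ k => exact hgP (k + 1) (t k) (hpos k)

lemma pairwise_disjoint_sdiff_iUnion_succ {Ω : Type*} (E : ℕ → Set Ω) :
    Pairwise (Function.onFun Disjoint fun k => E k \ ⋃ i, E (k + 1 + i)) := by
  refine (pairwise_disjoint_on _).mpr fun k l hkl => disjoint_sdiff_left.mono_right ?_
  obtain ⟨i, rfl⟩ := Nat.exists_eq_add_of_le (Nat.succ_le_of_lt hkl)
  exact sdiff_subset.trans (subset_iUnion (fun i => E (k + 1 + i)) i)

variable {Ω : Type*} [MeasurableSpace Ω]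

lemma measureReal_iUnion_add_le_of_le_half {μ : Measure Ω} [IsFiniteMeasure μ] {E : ℕ → Set Ω}
    {t : ℕ → ℝ} (hE : ∀ k, μ.real (E k) ≤ t k / 2) (ht : ∀ k, t (k + 1) ≤ t k / 2) (k : ℕ) :
    μ.real (⋃ i, E (k + i)) ≤ t k := by
  have ht0 : 0 ≤ t k := by linarith [hE k, measureReal_nonneg (μ := μ) (s := E k)]
  have hgeom : ∀ i, t (k + i) ≤ t k * (1 / 2) ^ i := fun i => by
    induction i with
    | zero => simp
    | succ i ih =>
      rw [← add_assoc, pow_succ]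
      linarith [ht (k + i)]
  have hsum : HasSum (fun i : ℕ => t k / 2 * (1 / 2 : ℝ) ^ i) (t k) := by
    simpa using hasSum_geometric_two.mul_left (t k / 2)
  refine ENNReal.toReal_le_of_le_ofReal ht0 ?_
  calc μ (⋃ i, E (k + i)) ≤ ∑' i, μ (E (k + i)) := measure_iUnion_le _
    _ ≤ ∑' i : ℕ, ENNReal.ofReal (t k / 2 * (1 / 2 : ℝ) ^ i) := by
        refine ENNReal.tsum_le_tsum fun i => ?_
        rw [← ofReal_measureReal]
        exact ENNReal.ofReal_le_ofReal (by linarith [hE (k + i), hgeom i])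
    _ = ENNReal.ofReal (t k) := by
        rw [← ENNReal.ofReal_tsum_of_nonneg (fun i => by positivity) hsum.summable, hsum.tsum_eq]

/-- Pairwise disjoint sets `D k`, with the tails of their union of measure at most `t k`, such that
the partial sums of `(t k / 2)⁻¹ 1_{D k}` with respect to `φ` reach `k` on a set of measure at
least `δ`. -/
structure IsResonant (μ : Measure Ω) (φ : ℕ → Ω → ℝ) (δ : ℝ) (t : ℕ → ℝ) (D : ℕ → Set Ω) :
    Prop where
  pos : ∀ k, 0 < t k
  measurableSet : ∀ k, MeasurableSet (D k)
  pairwise_disjoint : Pairwise (Function.onFun Disjoint D)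
  measureReal_le : ∀ k, μ.real (D k) ≤ t k / 2
  measureReal_tail_le : ∀ k, μ.real (⋃ i, D (k + i)) ≤ t k
  le_measureReal : ∀ k : ℕ,
    δ ≤ μ.real {x | ∃ m, (k : ℝ) ≤ |expansionSum φ (indicatorCoef μ φ (D k) (t k / 2)) m x|}

lemma abs_indicatorCoef_sub_sdiff_le {μ : Measure Ω} [IsFiniteMeasure μ] {φ : ℕ → Ω → ℝ} {M : ℝ}
    {n : ℕ} (hφ : Integrable (φ n) μ) (hM : ∀ z, |φ n z| ≤ M) (hM0 : 0 ≤ M) (E : Set Ω) {F : Set Ω}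
    (hF : MeasurableSet F) {s : ℝ} (hs : 0 < s) :
    |indicatorCoef μ φ E s n - indicatorCoef μ φ (E \ F) s n| ≤ M * μ.real F / s := by
  rw [indicatorCoef, indicatorCoef, ← integral_inter_add_sdiff hF hφ.integrableOn, ← sub_div,
    add_sub_cancel_right, abs_div, abs_of_pos hs]
  gcongr
  exact (abs_setIntegral_le_of_abs_le hM _).trans
    (mul_le_mul_of_nonneg_left (measureReal_mono inter_subset_right) hM0)

-- Removing from each set all the later ones makes the family disjoint; the scales decrease so fast
-- that this changes the relevant partial sums by at most `1`.
lemma IsBddONS.exists_isResonant {μ : Measure ℝ} [IsProbabilityMeasure μ] [NullSingletonClass μ]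
    {M : ℝ} {φ : ℕ → ℝ → ℝ} (h : IsBddONS μ M φ) {P : ℝ → Prop}
    (hP : ∃ᶠ t in nhdsWithin 0 (Ioi (0 : ℝ)), P t) :
    ∃ t D, (∀ k, P (t k)) ∧ IsResonant μ φ (1 / (8 * M ^ 2)) t D := by
  have hM := h.pos
  choose N hN using fun k : ℕ => h.exists_small_sets (A := (k : ℝ) + 1) (by positivity)
  have hhalf : Tendsto (fun t : ℝ => t / 2) (nhdsWithin 0 (Ioi 0)) (nhdsWithin 0 (Ioi 0)) :=
    tendsto_nhdsWithin_of_tendsto_nhds_of_eventually_within _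
      ((Continuous.tendsto' (f := fun t : ℝ => t / 2) (by fun_prop) 0 0 (by simp)).mono_left
        nhdsWithin_le_nhds)
      (eventually_mem_nhdsWithin.mono fun t (ht : 0 < t) => half_pos ht)
  obtain ⟨t, htP, ht0, htK⟩ := exists_rapidly_decreasing_seq
    (fun k => hP.and_eventually (hhalf.eventually (hN k))) fun k => 2 * (N k * M ^ 2 + 1)
  choose htP E hE hEt hbig using htP
  have htail := measureReal_iUnion_add_le_of_le_half hEt fun k => by
    nlinarith [htK k, mul_nonneg (by positivity : 0 ≤ (N k : ℝ) * M ^ 2) (ht0 (k + 1)).le]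
  have hmeas : ∀ k, MeasurableSet (⋃ i, E (k + i)) := fun k => MeasurableSet.iUnion fun _ => hE _
  refine ⟨t, fun k => E k \ ⋃ i, E (k + 1 + i), htP, ht0, fun k => (hE k).diff (hmeas (k + 1)),
    pairwise_disjoint_sdiff_iUnion_succ E, fun k => (measureReal_mono sdiff_subset).trans (hEt k),
    fun k => (measureReal_mono (iUnion_mono fun i => sdiff_subset)).trans (htail k), fun k => ?_⟩
  have hcoef : ∀ n < N k, _ := fun n _ => abs_indicatorCoef_sub_sdiff_le (h.integrable n)
    (h.abs_le n) hM.le (E k) (hmeas (k + 1)) (half_pos (ht0 k))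
  have hpert : N k * (M * μ.real (⋃ i, E (k + 1 + i)) / (t k / 2) * M) ≤ 1 := by
    rw [show N k * (M * μ.real (⋃ i, E (k + 1 + i)) / (t k / 2) * M)
      = N k * M ^ 2 * μ.real (⋃ i, E (k + 1 + i)) / (t k / 2) by ring,
      div_le_one (half_pos (ht0 k))]
    nlinarith [htK k, ht0 (k + 1),
      mul_le_mul_of_nonneg_left (htail (k + 1)) (by positivity : 0 ≤ (N k : ℝ) * M ^ 2)]
  calc 1 / (8 * M ^ 2) ≤ _ := hbig k
    _ ≤ _ := measureReal_exists_le_abs_expansionSum_le h.abs_le hcoef hpert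
    _ ≤ _ := measureReal_mono (ofPred_subset_ofPred.mpr fun _ ⟨m, _, hx⟩ => ⟨m, hx⟩)

end ResonantSets

section StepFunctions

/-- The function equal to `c k` on `D k` (for disjoint sets `D k`) and to zero elsewhere. -/
noncomputable def stepSum {Ω : Type*} (D : ℕ → Set Ω) (c : ℕ → ℝ) (x : Ω) : ℝ :=
  ∑' k, (D k).indicator (fun _ => c k) x

variable {Ω : Type*} {D : ℕ → Set Ω} {c : ℕ → ℝ}

lemma hasSum_stepSum_of_mem (hD : Pairwise (Function.onFun Disjoint D)) {k : ℕ} {x : Ω}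
    (hx : x ∈ D k) : HasSum (fun l => (D l).indicator (fun _ => c l) x) (c k) := by
  simpa only [indicator_of_mem hx] using hasSum_single
    (f := fun l => (D l).indicator (fun _ => c l) x) k fun l hl =>
      indicator_of_notMem (fun hxl => disjoint_left.mp (hD hl) hxl hx) _

lemma stepSum_of_mem (hD : Pairwise (Function.onFun Disjoint D)) {k : ℕ} {x : Ω}
    (hx : x ∈ D k) : stepSum D c x = c k :=
  (hasSum_stepSum_of_mem hD hx).tsum_eq

lemma stepSum_of_forall_notMem {x : Ω} (hx : ∀ k, x ∉ D k) : stepSum D c x = 0 := by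
  simp [stepSum, hx]

lemma stepSum_mem_insert_range (hD : Pairwise (Function.onFun Disjoint D)) (x : Ω) :
    stepSum D c x ∈ insert 0 (range c) := by
  by_cases hx : ∃ k, x ∈ D k
  · obtain ⟨k, hk⟩ := hx
    exact Or.inr ⟨k, (stepSum_of_mem hD hk).symm⟩
  · exact Or.inl (stepSum_of_forall_notMem (not_exists.mp hx))

lemma hasSum_stepSum (hD : Pairwise (Function.onFun Disjoint D)) (x : Ω) :
    HasSum (fun k => (D k).indicator (fun _ => c k) x) (stepSum D c x) := by
  refine Summable.hasSum ?_
  by_cases hx : ∃ k, x ∈ D k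
  · obtain ⟨k, hk⟩ := hx
    exact (hasSum_stepSum_of_mem hD hk).summable
  · simp [not_exists.mp hx, summable_zero]

variable [MeasurableSpace Ω]

lemma measurable_stepSum (hDm : ∀ k, MeasurableSet (D k))
    (hD : Pairwise (Function.onFun Disjoint D)) : Measurable (stepSum D c) := by
  refine measurable_of_tendsto_metrizable
    (f := fun n x => ∑ k ∈ Finset.range n, (D k).indicator (fun _ => c k) x) (fun n => ?_)
    (tendsto_pi_nhds.mpr fun x => (hasSum_stepSum hD x).tendsto_sum_nat)
  exact Finset.measurable_fun_sum _ fun k _ => measurable_const.indicator (hDm k)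

lemma integral_stepSum_mul {μ : Measure Ω} [IsFiniteMeasure μ]
    (hDm : ∀ k, MeasurableSet (D k)) (hc : Summable fun k => |c k| * μ.real (D k))
    {g : Ω → ℝ} (hg : Measurable g) {M : ℝ} (hgM : ∀ x, |g x| ≤ M) :
    ∫ x, stepSum D c x * g x ∂μ = ∑' k, c k * ∫ x in D k, g x ∂μ := by
  have hint : ∀ k, Integrable ((D k).indicator fun x => c k * g x) μ := fun k =>
    ((integrable_of_abs_le hg hgM).const_mul _).indicator (hDm k)
  have hnorm : ∀ k, ∫ x, ‖(D k).indicator (fun x => c k * g x) x‖ ∂μ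
      ≤ M * (|c k| * μ.real (D k)) := fun k => by
    calc ∫ x, ‖(D k).indicator (fun x => c k * g x) x‖ ∂μ
        ≤ ∫ x, (D k).indicator (fun _ => |c k| * M) x ∂μ := by
          refine integral_mono (hint k).norm ((integrable_const _).indicator (hDm k)) fun x => ?_
          rw [norm_indicator_eq_indicator_norm]
          refine indicator_le_indicator ?_
          rw [norm_mul, Real.norm_eq_abs]
          exact mul_le_mul_of_nonneg_left (hgM x) (abs_nonneg _)
      _ = M * (|c k| * μ.real (D k)) := by
          rw [integral_indicator_const _ (hDm k), smul_eq_mul]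
          ring
  have hsum := hasSum_integral_of_summable_integral_norm hint
    (Summable.of_nonneg_of_le (fun k => integral_nonneg fun _ => norm_nonneg _) hnorm
      (hc.mul_left M))
  calc ∫ x, stepSum D c x * g x ∂μ
      = ∫ x, ∑' k, (D k).indicator (fun x => c k * g x) x ∂μ := by
        refine integral_congr_ae (ae_of_all _ fun x => ?_)
        simp only [stepSum, ← tsum_mul_right, ← indicator_mul_left]
    _ = ∑' k, ∫ x, (D k).indicator (fun x => c k * g x) x ∂μ := hsum.tsum_eq.symm
    _ = ∑' k, c k * ∫ x in D k, g x ∂μ := by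
        simp only [integral_indicator (hDm _), integral_const_mul]

lemma lintegral_stepSum_rpow_le {μ : Measure Ω} (hDm : ∀ k, MeasurableSet (D k))
    (hD : Pairwise (Function.onFun Disjoint D)) {s b : ℕ → ℝ} (hs : ∀ k, 0 < s k)
    (hDs : ∀ k, μ (D k) ≤ ENNReal.ofReal (s k)) (hb0 : ∀ k, 0 ≤ b k) (hb : Summable b)
    {q : Ω → ℝ} {r : ℝ} (hq : ∀ᵐ x ∂μ, q x ≠ 0)
    (hc : ∀ᵐ x ∂μ, ∀ k, x ∈ D k → (|c k| / r) ^ q x ≤ b k / s k) :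
    ∫⁻ x, ENNReal.ofReal ((|stepSum D c x| / r) ^ q x) ∂μ ≤ ENNReal.ofReal (∑' k, b k) := by
  calc ∫⁻ x, ENNReal.ofReal ((|stepSum D c x| / r) ^ q x) ∂μ
      ≤ ∫⁻ x, ∑' k, (D k).indicator (fun _ => ENNReal.ofReal (b k / s k)) x ∂μ := by
        refine lintegral_mono_ae ?_
        filter_upwards [hq, hc] with x hqx hcx
        by_cases hx : ∃ k, x ∈ D k
        · obtain ⟨k, hk⟩ := hx
          rw [stepSum_of_mem hD hk]
          refine le_trans ?_ (ENNReal.le_tsum k)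
          rw [indicator_of_mem hk]
          exact ENNReal.ofReal_le_ofReal (hcx k hk)
        · simp [stepSum_of_forall_notMem (not_exists.mp hx), Real.zero_rpow hqx]
    _ = ∑' k, ENNReal.ofReal (b k / s k) * μ (D k) := by
        rw [lintegral_tsum fun k => (measurable_const.indicator (hDm k)).aemeasurable]
        exact tsum_congr fun k => lintegral_indicator_const (hDm k) _
    _ ≤ ∑' k, ENNReal.ofReal (b k) := by
        refine ENNReal.tsum_le_tsum fun k => ?_
        calc ENNReal.ofReal (b k / s k) * μ (D k)
            ≤ ENNReal.ofReal (b k / s k) * ENNReal.ofReal (s k) := by gcongr; exact hDs k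
          _ = ENNReal.ofReal (b k) := by
            rw [← ENNReal.ofReal_mul (div_nonneg (hb0 k) (hs k).le),
              div_mul_cancel₀ _ (hs k).ne']
    _ = ENNReal.ofReal (∑' k, b k) := (ENNReal.ofReal_tsum_of_nonneg hb0 hb).symm

end StepFunctions

section MeasurePreservingMaps

open ProbabilityTheory

variable {P : Measure ℝ} [IsProbabilityMeasure P] [NullSingletonClass P]

lemma continuous_cdf : Continuous (cdf P) := by
  simpa only [← cdf_eq_real] using continuous_measureReal_Iic P

lemma exists_cdf_eq {s : ℝ} (hs : s ∈ Ioo (0 : ℝ) 1) : ∃ a, cdf P a = s :=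
  mem_range_of_exists_le_of_exists_ge continuous_cdf
    (((tendsto_cdf_atBot P).eventually_le_const hs.1).exists)
    (((tendsto_cdf_atTop P).eventually_const_le hs.2).exists)

lemma measure_preimage_cdf_Iic (s : ℝ) : P (cdf P ⁻¹' Iic s) = ENNReal.ofReal (min s 1) := by
  refine le_antisymm ?_ ?_
  · rcases le_or_gt 1 s with hs | hs
    · simpa only [min_eq_right hs, ENNReal.ofReal_one] using prob_le_one
    · have hmax : ENNReal.ofReal (max s 0) = ENNReal.ofReal s := by
        rw [ENNReal.ofReal_max, ENNReal.ofReal_zero, max_eq_left zero_le]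
      rw [min_eq_left hs.le, ← hmax]
      refine ge_of_tendsto (ENNReal.continuous_ofReal.continuousWithinAt (s := Ioi (max s 0))) ?_
      filter_upwards [Ioo_mem_nhdsGT (max_lt hs one_pos)] with r hr
      obtain ⟨a, rfl⟩ := exists_cdf_eq (P := P) ⟨(le_max_right _ _).trans_lt hr.1, hr.2⟩
      rw [ofReal_cdf]
      exact measure_mono fun x hx => ((monotone_cdf P).reflect_lt
        (lt_of_le_of_lt hx ((le_max_left s 0).trans_lt hr.1))).le
  · rcases le_or_gt s 0 with hs | hs
    · simp [ENNReal.ofReal_of_nonpos (min_le_of_left_le hs)]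
    · refine le_of_tendsto (ENNReal.continuous_ofReal.continuousWithinAt (s := Iio (min s 1))) ?_
      filter_upwards [Ioo_mem_nhdsLT (lt_min hs one_pos)] with r hr
      obtain ⟨a, rfl⟩ := exists_cdf_eq (P := P) ⟨hr.1, hr.2.trans_le (min_le_right s 1)⟩
      rw [ofReal_cdf]
      exact measure_mono fun x hx =>
        (monotone_cdf P hx).trans (hr.2.le.trans (min_le_left s 1))

lemma map_cdf : P.map (cdf P) = volume.restrict (Icc (0 : ℝ) 1) := by
  have : IsProbabilityMeasure (P.map (cdf P)) :=
    Measure.isProbabilityMeasure_map continuous_cdf.aemeasurable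
  refine Measure.ext_of_Iic _ _ fun s => ?_
  rw [Measure.map_apply continuous_cdf.measurable measurableSet_Iic, measure_preimage_cdf_Iic,
    Measure.restrict_apply measurableSet_Iic, ← Ici_inter_Iic, inter_left_comm, Iic_inter_Iic,
    Ici_inter_Iic, Real.volume_Icc, sub_zero]

lemma measurePreserving_cdf_map_comp {Ω : Type*} [MeasurableSpace Ω] {μ : Measure Ω}
    [IsProbabilityMeasure μ] {τ : Ω → ℝ} (hτ : Measurable τ) (hfib : ∀ a, μ (τ ⁻¹' {a}) = 0) :
    MeasurePreserving (fun x => cdf (μ.map τ) (τ x)) μ (volume.restrict (Icc (0 : ℝ) 1)) := by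
  have : IsProbabilityMeasure (μ.map τ) := Measure.isProbabilityMeasure_map hτ.aemeasurable
  have : NullSingletonClass (μ.map τ) :=
    ⟨fun a => (Measure.map_apply hτ (measurableSet_singleton a)).trans (hfib a)⟩
  exact MeasurePreserving.comp ⟨continuous_cdf.measurable, map_cdf⟩ (hτ.measurePreserving μ)

/-- The function `x - (k + 1)` on `D k` and `x` elsewhere. Ordering `[0, 1]` by its values puts the
points of `D k` before all points lying outside the sets `D i` with `i ≥ k`. -/
noncomputable def layering (D : ℕ → Set ℝ) (x : ℝ) : ℝ :=
  x - stepSum D (fun k => k + 1) x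

lemma measurable_layering {D : ℕ → Set ℝ} (hDm : ∀ k, MeasurableSet (D k))
    (hD : Pairwise (Function.onFun Disjoint D)) : Measurable (layering D) :=
  measurable_id.sub (measurable_stepSum hDm hD)

lemma countable_layering_preimage_singleton {D : ℕ → Set ℝ}
    (hD : Pairwise (Function.onFun Disjoint D)) (a : ℝ) : (layering D ⁻¹' {a}).Countable := by
  refine (((countable_range fun k : ℕ => (k : ℝ) + 1).insert 0).image fun y => a + y).mono ?_
  rintro x rfl
  exact ⟨_, stepSum_mem_insert_range hD x, sub_add_cancel _ _⟩

lemma mem_iUnion_add_of_layering_le {D : ℕ → Set ℝ} (hD : Pairwise (Function.onFun Disjoint D))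
    {k : ℕ} {x z : ℝ} (hxk : x ∈ D k) (hx : x ≤ 1) (hz : 0 < z)
    (hzx : layering D z ≤ layering D x) : z ∈ ⋃ i, D (k + i) := by
  rw [layering, layering, stepSum_of_mem hD hxk] at hzx
  by_cases hzD : ∃ i, z ∈ D i
  · obtain ⟨i, hi⟩ := hzD
    rw [stepSum_of_mem hD hi] at hzx
    have hki : k < i + 1 := by exact_mod_cast (by linarith : (k : ℝ) < i + 1)
    obtain ⟨j, rfl⟩ := Nat.exists_eq_add_of_le (Nat.lt_succ_iff.mp hki)
    exact mem_iUnion_of_mem j hi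
  · rw [stepSum_of_forall_notMem (not_exists.mp hzD)] at hzx
    linarith [k.cast_nonneg (α := ℝ)]

lemma cdf_map_layering_le {μ : Measure ℝ} [IsProbabilityMeasure μ] (hμ : ∀ᵐ x ∂μ, 0 < x)
    {D : ℕ → Set ℝ} (hDm : ∀ k, MeasurableSet (D k)) (hD : Pairwise (Function.onFun Disjoint D))
    {k : ℕ} {x : ℝ} (hxk : x ∈ D k) (hx : x ≤ 1) :
    cdf (μ.map (layering D)) (layering D x) ≤ μ.real (⋃ i, D (k + i)) := by
  have hτ := measurable_layering hDm hD
  have : IsProbabilityMeasure (μ.map (layering D)) :=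
    Measure.isProbabilityMeasure_map hτ.aemeasurable
  rw [cdf_eq_real, map_measureReal_apply hτ measurableSet_Iic]
  exact ENNReal.toReal_mono (measure_ne_top _ _) (measure_mono_ae
    (hμ.mono fun z hz hzx => mem_iUnion_add_of_layering_le hD hxk hx hz hzx))

instance isProbabilityMeasure_restrict_Icc_zero_one :
    IsProbabilityMeasure (volume.restrict (Icc (0 : ℝ) 1)) :=
  ⟨by simp⟩

lemma exists_measurePreserving01_le {D : ℕ → Set ℝ} (hDm : ∀ k, MeasurableSet (D k))
    (hD : Pairwise (Function.onFun Disjoint D)) {t : ℕ → ℝ}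
    (ht : ∀ k, (volume.restrict (Icc (0 : ℝ) 1)).real (⋃ i, D (k + i)) ≤ t k) :
    ∃ ω, MeasurePreserving01 ω ∧ ∀ x ∈ Icc (0 : ℝ) 1, ∀ k, x ∈ D k → ω x ≤ t k := by
  have hpos : ∀ᵐ x ∂volume.restrict (Icc (0 : ℝ) 1), 0 < x := by
    filter_upwards [Measure.ae_ne _ 0, ae_restrict_mem measurableSet_Icc] with x hx0 hx
    exact lt_of_le_of_ne hx.1 hx0.symm
  exact ⟨fun x => cdf ((volume.restrict (Icc 0 1)).map (layering D)) (layering D x),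
    ⟨fun x _ => ⟨cdf_nonneg _ _, cdf_le_one _ _⟩,
      measurePreserving_cdf_map_comp (measurable_layering hDm hD) fun a =>
        (countable_layering_preimage_singleton hD a).measure_zero _⟩,
    fun x hx k hxk => (cdf_map_layering_le hpos hDm hD hxk hx.2).trans (ht k)⟩

end MeasurePreservingMaps

section UniformBoundedness

lemma setOf_lt_abs_subset_union {X Ω : Type*} [NormedAddCommGroup X] [NormedSpace ℝ X]
    (T : ℕ → Ω → X →L[ℝ] ℝ) {A s : ℝ} (hs : 0 < s) (a e : X) :
    {x | ∃ m, 2 * A / s < |T m x e|} ⊆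
      {x | ∃ m, A < |T m x a|} ∪ {x | ∃ m, A < |T m x (a + s • e)|} := by
  rintro x ⟨m, hm⟩
  by_contra! hx
  simp only [mem_union, mem_ofPred_eq, not_or, not_exists, not_lt] at hx
  have hse : s * T m x e = T m x (a + s • e) - T m x a := by simp
  have habs : s * |T m x e| ≤ 2 * A := by
    rw [← abs_of_pos hs, ← abs_mul, hse]
    linarith [abs_sub (T m x (a + s • e)) (T m x a), hx.1 m, hx.2 m]
  rw [div_lt_iff₀ hs] at hm
  linarith

variable {Ω : Type*} [MeasurableSpace Ω] {μ : Measure Ω}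

-- If `a i` tends to `b`, then `U b` is contained in the lower limit of the sets `U (a i)`.
lemma isClosed_setOf_measure_le {X : Type*} [TopologicalSpace X] [SequentialSpace X]
    {U : X → Set Ω} (hU : ∀ x, IsOpen {a | x ∈ U a}) (ε : ENNReal) :
    IsClosed {a | μ (U a) ≤ ε} := by
  refine IsSeqClosed.isClosed fun a b ha hab => ?_
  have hmono : Monotone fun n => ⋂ i ≥ n, U (a i) := fun n n' hn =>
    biInter_subset_biInter_left fun i hi => le_trans hn hi
  have hsub : U b ⊆ ⋃ n, ⋂ i ≥ n, U (a i) := fun x hx => by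
    obtain ⟨n, hn⟩ := eventually_atTop.mp (hab.eventually ((hU x).mem_nhds hx))
    exact mem_iUnion.mpr ⟨n, mem_iInter₂.mpr hn⟩
  calc μ (U b) ≤ μ (⋃ n, ⋂ i ≥ n, U (a i)) := measure_mono hsub
    _ = ⨆ n, μ (⋂ i ≥ n, U (a i)) := hmono.measure_iUnion
    _ ≤ ε := iSup_le fun n => (measure_mono (biInter_subset_of_mem le_rfl)).trans (ha n)

lemma exists_measure_lt_abs_le [IsFiniteMeasure μ] {f : ℕ → Ω → ℝ} (hf : ∀ m, Measurable (f m))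
    (hnull : μ {x | ∀ B : ℝ, ∃ m, B < |f m x|} = 0) {ε : ENNReal} (hε : 0 < ε) :
    ∃ j : ℕ, μ {x | ∃ m, (j : ℝ) < |f m x|} ≤ ε := by
  have hmeas : ∀ j : ℕ, MeasurableSet {x | ∃ m, (j : ℝ) < |f m x|} := fun j => by
    rw [ofPred_exists]
    exact MeasurableSet.iUnion fun m => measurableSet_lt measurable_const (hf m).abs
  have hanti : Antitone fun j : ℕ => {x | ∃ m, (j : ℝ) < |f m x|} := fun j j' hj x ⟨m, hx⟩ =>
    ⟨m, lt_of_le_of_lt (Nat.cast_le.mpr hj) hx⟩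
  have hinter : μ (⋂ j : ℕ, {x | ∃ m, (j : ℝ) < |f m x|}) = 0 := by
    refine measure_mono_null (t := {x | ∀ B : ℝ, ∃ m, B < |f m x|}) (fun x hx B => ?_) hnull
    obtain ⟨j, hj⟩ := exists_nat_gt B
    obtain ⟨m, hm⟩ := mem_iInter.mp hx j
    exact ⟨m, hj.trans hm⟩
  have hlim := tendsto_measure_iInter_atTop (μ := μ) (fun j => (hmeas j).nullMeasurableSet) hanti
    ⟨0, measure_ne_top _ _⟩
  exact (hlim.eventually_le_const (hinter ▸ hε)).exists

variable {X : Type*} [NormedAddCommGroup X] [NormedSpace ℝ X]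

-- Baire category: otherwise the closed sets of those `a` for which the maximal function of `T`
-- exceeds `j` only on a set of measure at most `δ / 2` cover `X`, so one of them contains a ball.
theorem exists_measure_forall_exists_lt_abs_pos [CompleteSpace X] [IsFiniteMeasure μ]
    {T : ℕ → Ω → X →L[ℝ] ℝ} (hT : ∀ m a, Measurable fun x => T m x a) {δ : ENNReal} (hδ : 0 < δ)
    (hbig : ∀ A : ℝ, ∃ e, ‖e‖ ≤ 1 ∧ δ < μ {x | ∃ m, A < |T m x e|}) :
    ∃ a, 0 < μ {x | ∀ B : ℝ, ∃ m, B < |T m x a|} := by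
  by_contra! hnull
  let V : ℕ → Set X := fun j => {a | μ {x | ∃ m, (j : ℝ) < |T m x a|} ≤ δ / 2}
  have hclosed : ∀ j, IsClosed (V j) := fun j => isClosed_setOf_measure_le (fun x => by
    simp only [mem_ofPred_eq]
    rw [ofPred_exists]
    exact isOpen_iUnion fun m => isOpen_lt continuous_const (T m x).continuous.abs) _
  have hcover : ⋃ j, V j = univ := eq_univ_of_forall fun a => mem_iUnion.mpr
    (exists_measure_lt_abs_le (hT · a) (nonpos_iff_eq_zero.mp (hnull a)) (ENNReal.half_pos hδ.ne'))
  obtain ⟨j, a, ha⟩ := nonempty_interior_of_iUnion_of_closed hclosed hcover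
  obtain ⟨r, hr, hball⟩ := Metric.isOpen_iff.mp isOpen_interior a ha
  obtain ⟨e, he, hδe⟩ := hbig (2 * j / (r / 2))
  have hmem : a + (r / 2) • e ∈ V j := by
    refine interior_subset (hball ?_)
    rw [Metric.mem_ball, dist_self_add_left, norm_smul, Real.norm_of_nonneg (half_pos hr).le]
    nlinarith
  refine hδe.not_ge ?_
  calc μ {x | ∃ m, 2 * j / (r / 2) < |T m x e|}
      ≤ _ := measure_mono (setOf_lt_abs_subset_union T (half_pos hr) a e)
    _ ≤ _ := measure_union_le _ _
    _ ≤ δ / 2 + δ / 2 := add_le_add (interior_subset ha : a ∈ V j) hmem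
    _ = δ := ENNReal.add_halves δ

/-- The functional `a ↦ ∑ k, a k * d k` on `ℓ¹`, for a bounded sequence `d`. -/
noncomputable def ellOnePairing {d : ℕ → ℝ} {M : ℝ} (hM : 0 ≤ M) (hd : ∀ k, |d k| ≤ M) :
    lp (fun _ : ℕ => ℝ) 1 →L[ℝ] ℝ :=
  lp.tsumCLM ℝ ℕ ℝ ∘L lp.mapCLM 1 (fun k => ContinuousLinearMap.mul ℝ ℝ (d k)) hM
    (fun k => by simpa using hd k)

lemma ellOnePairing_apply {d : ℕ → ℝ} {M : ℝ} (hM : 0 ≤ M) (hd : ∀ k, |d k| ≤ M)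
    (a : lp (fun _ : ℕ => ℝ) 1) : ellOnePairing hM hd a = ∑' k, a k * d k :=
  tsum_congr fun k => mul_comm (d k) (a k)

lemma ellOnePairing_single {d : ℕ → ℝ} {M : ℝ} (hM : 0 ≤ M) (hd : ∀ k, |d k| ≤ M) (k : ℕ) :
    ellOnePairing hM hd (lp.single 1 k (1 : ℝ)) = d k := by
  rw [ellOnePairing_apply, tsum_eq_single k fun l hl => by simp [hl]]
  simp

theorem exists_summable_measure_forall_exists_lt_abs_pos [IsFiniteMeasure μ] {φ : ℕ → Ω → ℝ}
    (hφ : ∀ n, Measurable (φ n)) {d : ℕ → ℕ → ℝ} {M δ : ℝ} (hd : ∀ k n, |d k n| ≤ M) (hδ : 0 < δ)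
    (hbig : ∀ k : ℕ, δ ≤ μ.real {x | ∃ m, (k : ℝ) ≤ |expansionSum φ (d k) m x|}) :
    ∃ a : ℕ → ℝ, Summable (fun k => |a k|) ∧ 0 < μ {x | ∀ B : ℝ, ∃ m,
      B < |expansionSum φ (fun n => ∑' k, a k * d k n) m x|} := by
  have hM : 0 ≤ M := (abs_nonneg _).trans (hd 0 0)
  let L : ℕ → lp (fun _ : ℕ => ℝ) 1 →L[ℝ] ℝ := fun n => ellOnePairing hM fun k => hd k n
  let T : ℕ → Ω → lp (fun _ : ℕ => ℝ) 1 →L[ℝ] ℝ := fun m x => ∑ n ∈ Finset.range m, φ n x • L n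
  have hT : ∀ m x a, T m x a = expansionSum φ (fun n => L n a) m x := fun m x a => by
    simp [T, expansionSum, mul_comm]
  have hbigT : ∀ A : ℝ, ∃ e, ‖e‖ ≤ 1 ∧ ENNReal.ofReal (δ / 2) < μ {x | ∃ m, A < |T m x e|} :=
    fun A => by
    obtain ⟨k, hk⟩ := exists_nat_gt A
    refine ⟨lp.single 1 k 1, by simp [lp.norm_single], ?_⟩
    simp only [hT, L, ellOnePairing_single]
    rw [ENNReal.ofReal_lt_iff_lt_toReal (half_pos hδ).le (measure_ne_top _ _)]
    exact (half_lt_self hδ).trans_le ((hbig k).trans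
      (measureReal_mono (ofPred_subset_ofPred.mpr fun _ ⟨m, hm⟩ => ⟨m, hk.trans_le hm⟩)))
  obtain ⟨a, ha⟩ := exists_measure_forall_exists_lt_abs_pos
    (fun m a => by simpa only [hT] using measurable_expansionSum hφ _ m)
    (ENNReal.ofReal_pos.mpr (half_pos hδ)) hbigT
  refine ⟨a, by simpa using (lp.memℓp a).summable (by norm_num), ?_⟩
  simpa only [hT, L, ellOnePairing_apply] using ha

end UniformBoundedness

section Divergence

lemma rpow_le_mul_exp {y Y q C : ℝ} (hy : 0 ≤ y) (hyY : y ≤ Y) (hq : 1 ≤ q)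
    (hC : (q - 1) * Real.log Y ≤ C) : y ^ q ≤ y * Real.exp C := by
  rcases hy.eq_or_lt with rfl | hy
  · simp [Real.zero_rpow (by linarith : q ≠ 0)]
  · calc y ^ q = y * y ^ (q - 1) := by rw [Real.rpow_sub_one hy.ne', mul_div_cancel₀ _ hy.ne']
      _ ≤ y * Y ^ (q - 1) := by gcongr
      _ = y * Real.exp ((q - 1) * Real.log Y) := by
        rw [Real.rpow_def_of_pos (hy.trans_le hyY), mul_comm (q - 1)]
      _ ≤ y * Real.exp C := by gcongr

lemma abs_div_half_rpow_le {a L t q C : ℝ} (haL : |a| ≤ L) (ht : 0 < t) (hq : 1 ≤ q) (hC : 0 ≤ C)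
    (hqt : (q - 1) * Real.log (Real.exp 1 / t) ≤ C) :
    (|a / (t / 2)| / ((L + 1) * Real.exp C)) ^ q ≤ |a| / (L + 1) / (t / 2) := by
  have hL : 0 ≤ L := (abs_nonneg a).trans haL
  have hy : |a / (t / 2)| / ((L + 1) * Real.exp C) * Real.exp C = |a| / (L + 1) / (t / 2) := by
    rw [abs_div, abs_of_pos (half_pos ht)]
    field_simp
  refine (rpow_le_mul_exp (by positivity) ?_ hq hqt).trans_eq hy
  calc |a / (t / 2)| / ((L + 1) * Real.exp C)
      ≤ |a / (t / 2)| / ((L + 1) * Real.exp C) * Real.exp C :=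
        le_mul_of_one_le_right (by positivity) (Real.one_le_exp hC)
    _ = |a| / (L + 1) / (t / 2) := hy
    _ ≤ 1 / (t / 2) := by
        gcongr
        exact (div_le_one (by positivity)).mpr (by linarith)
    _ = 2 / t := one_div_div t 2
    _ ≤ Real.exp 1 / t := by
        gcongr
        linarith [Real.add_one_le_exp (1 : ℝ)]

lemma vpNorm_stepSum_lt_top {q : ℝ → ℝ} (hq : ∀ x ∈ Icc (0 : ℝ) 1, 1 ≤ q x) {C : ℝ} (hC : 0 ≤ C)
    {D : ℕ → Set ℝ} (hDm : ∀ k, MeasurableSet (D k)) (hD : Pairwise (Function.onFun Disjoint D))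
    {t : ℕ → ℝ} (ht : ∀ k, 0 < t k)
    (hDt : ∀ k, (volume.restrict (Icc (0 : ℝ) 1)).real (D k) ≤ t k / 2)
    (hqt : ∀ x ∈ Icc (0 : ℝ) 1, ∀ k, x ∈ D k → (q x - 1) * Real.log (Real.exp 1 / t k) ≤ C)
    {a : ℕ → ℝ} (ha : Summable fun k => |a k|) :
    vpNorm q (stepSum D fun k => a k / (t k / 2)) < ⊤ := by
  have haL : ∀ k, |a k| ≤ ∑' k, |a k| := fun k => ha.le_tsum k fun _ _ => abs_nonneg _
  have : 0 ≤ ∑' k, |a k| := (abs_nonneg _).trans (haL 0)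
  refine lt_of_le_of_lt (sInf_le ⟨((∑' k, |a k|) + 1) * Real.exp C, by positivity, rfl, ?_⟩)
    ENNReal.ofReal_lt_top
  refine (lintegral_stepSum_rpow_le (s := fun k => t k / 2)
    (b := fun k => |a k| / ((∑' k, |a k|) + 1)) hDm hD (fun k => half_pos (ht k)) (fun k => ?_)
    (fun k => by positivity) (ha.div_const _) ?_ ?_).trans ?_
  · exact (ENNReal.le_ofReal_iff_toReal_le (measure_ne_top _ _) (half_pos (ht k)).le).mpr (hDt k)
  · filter_upwards [ae_restrict_mem measurableSet_Icc] with x hx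
    exact (one_pos.trans_le (hq x hx)).ne'
  · filter_upwards [ae_restrict_mem measurableSet_Icc] with x hx k hk
    exact abs_div_half_rpow_le (haL k) (ht k) (hq x hx) hC (hqt x hx k hk)
  · rw [tsum_div_const, ENNReal.ofReal_le_one]
    exact (div_le_one (by positivity)).mpr (by linarith)

namespace MemPln

variable {p : ℝ → ℝ}

lemma one_le (hp : MemPln p) {x : ℝ} (hx : x ∈ Icc (0 : ℝ) 1) : 1 ≤ p x :=
  hp.2.1 ▸ hp.1 ⟨le_rfl, zero_le_one⟩ hx hx.1

lemma exists_frequently_le (hp : MemPln p) :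
    ∃ C, 0 ≤ C ∧ ∃ᶠ t in nhdsWithin 0 (Ioi 0),
      t ∈ Ioc (0 : ℝ) 1 ∧ (p t - 1) * Real.log (Real.exp 1 / t) ≤ C := by
  obtain ⟨-, -, -, C, hC⟩ := hp
  exact ⟨max C 0, le_max_right C 0, (hC.and_eventually (Ioc_mem_nhdsGT one_pos)).mono
    fun t ht => ⟨ht.2, ht.1.trans (le_max_left C 0)⟩⟩

lemma sub_one_mul_log_le (hp : MemPln p) {s t : ℝ} (hs : s ∈ Icc (0 : ℝ) 1)
    (ht : t ∈ Ioc (0 : ℝ) 1) (hst : s ≤ t) :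
    (p s - 1) * Real.log (Real.exp 1 / t) ≤ (p t - 1) * Real.log (Real.exp 1 / t) := by
  have hlog : 0 ≤ Real.log (Real.exp 1 / t) := Real.log_nonneg
    ((one_le_div ht.1).mpr (ht.2.trans (Real.one_le_exp zero_le_one)))
  gcongr
  exact hp.1 hs (Ioc_subset_Icc_self ht) hst

end MemPln

section Resonant

variable {Ω : Type*} [MeasurableSpace Ω] {μ : Measure Ω} [IsProbabilityMeasure μ] {M δ : ℝ}
  {φ : ℕ → Ω → ℝ} {t : ℕ → ℝ} {D : ℕ → Set Ω}

lemma IsResonant.abs_indicatorCoef_le (hD : IsResonant μ φ δ t D) (h : IsBddONS μ M φ) (k n : ℕ) :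
    |indicatorCoef μ φ (D k) (t k / 2) n| ≤ M := by
  rw [indicatorCoef, abs_div, abs_of_pos (half_pos (hD.pos k)), div_le_iff₀ (half_pos (hD.pos k))]
  exact (abs_setIntegral_le_of_abs_le (h.abs_le n) _).trans
    (mul_le_mul_of_nonneg_left (hD.measureReal_le k) h.pos.le)

lemma IsResonant.integral_stepSum_mul (hD : IsResonant μ φ δ t D) (h : IsBddONS μ M φ)
    {a : ℕ → ℝ} (ha : Summable fun k => |a k|) (n : ℕ) :
    ∫ z, stepSum D (fun k => a k / (t k / 2)) z * φ n z ∂μ =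
      ∑' k, a k * indicatorCoef μ φ (D k) (t k / 2) n := by
  rw [_root_.integral_stepSum_mul hD.measurableSet
    (ha.of_nonneg_of_le (fun k => by positivity) fun k => ?_) (h.measurable n) (h.abs_le n)]
  · exact tsum_congr fun k => (div_mul_eq_mul_div _ _ _).trans (mul_div_assoc _ _ _)
  · rw [abs_div, abs_of_pos (half_pos (hD.pos k)), div_mul_eq_mul_div,
      div_le_iff₀ (half_pos (hD.pos k))]
    exact mul_le_mul_of_nonneg_left (hD.measureReal_le k) (abs_nonneg _)

lemma IsResonant.exists_stepSum_divergent (hD : IsResonant μ φ δ t D) (h : IsBddONS μ M φ)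
    (hδ : 0 < δ) :
    ∃ a : ℕ → ℝ, Summable (fun k => |a k|) ∧ 0 < μ {x | ∀ B : ℝ, ∃ m, B < |expansionSum φ
      (fun n => ∫ z, stepSum D (fun k => a k / (t k / 2)) z * φ n z ∂μ) m x|} := by
  obtain ⟨a, ha, hdiv⟩ := exists_summable_measure_forall_exists_lt_abs_pos h.measurable
    (hD.abs_indicatorCoef_le h) hδ hD.le_measureReal
  exact ⟨a, ha, by simpa only [hD.integral_stepSum_mul h ha] using hdiv⟩

end Resonant

/-- The sequence `φ_1, φ_2, …` reindexed from `0` and clipped to `[-M, M]`; clipping changes a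
system bounded by `M` on a null set only. -/
def clippedSystem (M : ℝ) (φ : ℕ → ℝ → ℝ) (n : ℕ) (x : ℝ) : ℝ :=
  max (-M) (min M (φ (n + 1) x))

section ClippedSystem

variable {φ : ℕ → ℝ → ℝ} {M : ℝ}

lemma clippedSystem_ae_eq (hUB : UnifBounded φ M) :
    ∀ᵐ x ∂volume.restrict (Icc (0 : ℝ) 1), ∀ n, clippedSystem M φ n x = φ (n + 1) x := by
  filter_upwards [ae_all_iff.mpr fun n => hUB.2 (n + 1) n.succ_pos] with x hx n
  rw [clippedSystem, min_eq_right (abs_le.mp (hx n)).2, max_eq_right (abs_le.mp (hx n)).1]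

lemma isBddONS_clippedSystem (hONS : IsONS φ) (hUB : UnifBounded φ M) :
    IsBddONS (volume.restrict (Icc (0 : ℝ) 1)) M (clippedSystem M φ) where
  measurable n := measurable_const.max (measurable_const.min (hONS.1 _ n.succ_pos))
  abs_le n x := abs_le.mpr ⟨le_max_left _ _, max_le (by linarith [hUB.1]) (min_le_left _ _)⟩
  integral_mul n m := by
    have hint := hONS.2 (n + 1) (m + 1) n.succ_pos m.succ_pos
    simp only [Nat.add_right_cancel_iff] at hint
    rw [← hint]
    refine integral_congr_ae ?_
    filter_upwards [clippedSystem_ae_eq hUB] with x hx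
    rw [hx n, hx m]

lemma expansionSum_clippedSystem_ae_eq (hUB : UnifBounded φ M) (f : ℝ → ℝ) :
    ∀ᵐ x ∂volume.restrict (Icc (0 : ℝ) 1), ∀ m, expansionSum (clippedSystem M φ)
      (fun n => ∫ z in Icc (0 : ℝ) 1, f z * clippedSystem M φ n z) m x = partialSum φ f m x := by
  have hcoef : ∀ n, ∫ z in Icc (0 : ℝ) 1, f z * clippedSystem M φ n z
      = fourierCoef φ f (n + 1) := fun n => by
    refine integral_congr_ae ?_
    filter_upwards [clippedSystem_ae_eq hUB] with z hz
    rw [hz n]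
  filter_upwards [clippedSystem_ae_eq hUB] with x hx m
  simp only [expansionSum, hcoef, hx]
  rw [Finset.range_eq_Ico, Finset.sum_Ico_add' (fun n => fourierCoef φ f n * φ n x) 0 m 1]
  rfl

lemma volume_divergence_pos (hUB : UnifBounded φ M) {f : ℝ → ℝ}
    (hf : 0 < volume.restrict (Icc (0 : ℝ) 1) {x | ∀ B : ℝ, ∃ m, B < |expansionSum
      (clippedSystem M φ) (fun n => ∫ z in Icc (0 : ℝ) 1, f z * clippedSystem M φ n z) m x|}) :
    0 < volume {x ∈ Icc (0 : ℝ) 1 | ∀ B : ℝ, ∃ m : ℕ, 1 ≤ m ∧ B < |partialSum φ f m x|} := by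
  refine hf.trans_le ((measure_mono_ae ?_).trans (Measure.restrict_apply_le (Icc (0 : ℝ) 1) _))
  filter_upwards [expansionSum_clippedSystem_ae_eq hUB f, ae_restrict_mem measurableSet_Icc]
    with x hx hxI hdiv
  refine ⟨hxI, fun B => ?_⟩
  obtain ⟨m, hm⟩ := hdiv (max B 0)
  rw [hx m] at hm
  have hm0 : m ≠ 0 := by
    rintro rfl
    simp [partialSum] at hm
  exact ⟨m, Nat.one_le_iff_ne_zero.mpr hm0, (le_max_left B 0).trans_lt hm⟩

end ClippedSystem

end Divergence

/-- Main theorem: for any uniformly bounded ONS `φ` and any `p ∈ P_ln` there exist a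
measure preserving transformation `ω : [0,1] → [0,1]` and a function
`f ∈ L^{p(ω(·))}[0,1]` whose Fourier series with respect to `φ` diverges unboundedly
on a set of positive measure. -/
theorem divergence_in_variable_exponent_space (φ : ℕ → ℝ → ℝ) (M : ℝ)
    (hONS : IsONS φ) (hUB : UnifBounded φ M) (p : ℝ → ℝ) (hp : MemPln p) :
    ∃ ω : ℝ → ℝ, MeasurePreserving01 ω ∧
      ∃ f : ℝ → ℝ, Measurable f ∧ vpNorm (fun t => p (ω t)) f < ⊤ ∧
        0 < volume {x ∈ Set.Icc (0:ℝ) 1 |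
          ∀ B : ℝ, ∃ m : ℕ, 1 ≤ m ∧ B < |partialSum φ f m x|} := by
  have h := isBddONS_clippedSystem hONS hUB
  have hM := hUB.1
  obtain ⟨C, hC, hfreq⟩ := hp.exists_frequently_le
  obtain ⟨t, D, ht, hD⟩ := h.exists_isResonant hfreq
  obtain ⟨ω, hω, hωt⟩ := exists_measurePreserving01_le hD.measurableSet hD.pairwise_disjoint
    hD.measureReal_tail_le
  obtain ⟨a, ha, hdiv⟩ := hD.exists_stepSum_divergent h (by positivity)
  refine ⟨ω, hω, stepSum D fun k => a k / (t k / 2),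
    measurable_stepSum hD.measurableSet hD.pairwise_disjoint,
    vpNorm_stepSum_lt_top (fun x hx => hp.one_le (hω.1 hx)) hC hD.measurableSet
      hD.pairwise_disjoint hD.pos hD.measureReal_le (fun x hx k hk => ?_) ha,
    volume_divergence_pos hUB hdiv⟩
  exact (hp.sub_one_mul_log_le (hω.1 hx) (ht k).1 (hωt x hx k hk)).trans (ht k).2
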